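/- Let N ≥ 2 and μ > 0, and let Ψ : (ℝ^d)^N → ℂ be smooth, 1-periodic in each coordinate, symmetric under permutations of the N variables, with ∫_{[0,1]^{dN}} |Ψ|² = 1, and satisfying the spectral localization bound ‖H_NΨ − (E₀(N) + μ/2)Ψ‖_{L²([0,1]^{dN})} ≤ μ/2. Then (2π)² · ∑_{i=1}^N ∑_{j=1}^N ∫_{[0,1]^{dN}} ∇_{x_j}(Q_iΨ) · conj(∇_{x_j}Ψ) dx ≤ (v(0) + μ/2)² + (N/(2(N−1)))·(μ + 3v(0) + v̂(0))·(2μ + v(0) − v̂(0)). -/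

import Mathlib

open MeasureTheory Real

noncomputable section

/-- The unit box `[0,1]^d` in `ℝ^d`. -/
def boxd (d : ℕ) : Set (Fin d → ℝ) := Set.univ.pi fun _ => Set.Icc (0 : ℝ) 1

/-- The unit box `[0,1]^{dN}` in `(ℝ^d)^N`. -/
def boxN (d N : ℕ) : Set (Fin N → Fin d → ℝ) :=
  Set.univ.pi fun _ => Set.univ.pi fun _ => Set.Icc (0 : ℝ) 1

/-- `|p|²` for the lattice point `p = 2πk ∈ (2πℤ)^d`. -/
def pSq (d : ℕ) (k : Fin d → ℤ) : ℝ := ∑ j, (2 * π * (k j : ℝ)) ^ 2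

/-- `v` is 1-periodic in each coordinate. -/
def PeriodicPot (d : ℕ) (v : (Fin d → ℝ) → ℝ) : Prop :=
  ∀ (x : Fin d → ℝ) (k : Fin d → ℤ), v (fun j => x j + (k j : ℝ)) = v x

/-- `vhat` gives the Fourier coefficients of `v`:
`v̂(p) = ∫_{[0,1]^d} v(x) e^{-ip·x} dx` for `p = 2πk`. -/
def HasFourierCoeffs (d : ℕ) (v : (Fin d → ℝ) → ℝ) (vhat : (Fin d → ℤ) → ℝ) : Prop :=
  ∀ k : Fin d → ℤ, (vhat k : ℂ) =
    ∫ x in boxd d, (v x : ℂ) * Complex.exp (-Complex.I * ∑ j, (2 * π * (k j : ℝ)) * x j)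

/-- `v` equals its Fourier series pointwise. -/
def HasFourierExpansion (d : ℕ) (v : (Fin d → ℝ) → ℝ) (vhat : (Fin d → ℤ) → ℝ) : Prop :=
  ∀ x : Fin d → ℝ, (v x : ℂ) =
    ∑' k : Fin d → ℤ, (vhat k : ℂ) * Complex.exp (Complex.I * ∑ j, (2 * π * (k j : ℝ)) * x j)

/-- The standing assumptions on the interaction potential `v` with Fourier
coefficients `vhat`: continuous, periodic, even, with nonnegative summable
Fourier coefficients, equal to its Fourier series. -/
structure PotentialAssumptions (d : ℕ) (v : (Fin d → ℝ) → ℝ)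
    (vhat : (Fin d → ℤ) → ℝ) : Prop where
  continuous : Continuous v
  periodic : PeriodicPot d v
  even : ∀ x, v (-x) = v x
  coeffs : HasFourierCoeffs d v vhat
  nonneg : ∀ k, 0 ≤ vhat k
  summable : Summable vhat
  expansion : HasFourierExpansion d v vhat

/-- An `N`-particle wave function is 1-periodic in each coordinate. -/
def PeriodicWF (d N : ℕ) (Ψ : (Fin N → Fin d → ℝ) → ℂ) : Prop :=
  ∀ (x : Fin N → Fin d → ℝ) (k : Fin N → Fin d → ℤ),
    Ψ (fun i j => x i j + (k i j : ℝ)) = Ψ x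

/-- An `N`-particle wave function is symmetric under permutation of the particles. -/
def SymmetricWF (d N : ℕ) (Ψ : (Fin N → Fin d → ℝ) → ℂ) : Prop :=
  ∀ (σ : Equiv.Perm (Fin N)) (x : Fin N → Fin d → ℝ), Ψ (fun i => x (σ i)) = Ψ x

/-- `∫_{[0,1]^{dN}} |Ψ|² = 1`. -/
def Normalized (d N : ℕ) (Ψ : (Fin N → Fin d → ℝ) → ℂ) : Prop :=
  ∫ x in boxN d N, ‖Ψ x‖ ^ 2 = 1

/-- The unit vector in the direction of the `j`-th coordinate of the `i`-th particle. -/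
def dir (d N : ℕ) (i : Fin N) (j : Fin d) : Fin N → Fin d → ℝ :=
  Pi.single i (Pi.single j 1)

/-- The kinetic energy `∑_{i=1}^N ∫_{[0,1]^{dN}} |∇_{x_i}Ψ|² dx`. -/
def kineticEnergy (d N : ℕ) (Ψ : (Fin N → Fin d → ℝ) → ℂ) : ℝ :=
  ∑ i : Fin N, ∫ x in boxN d N, ∑ j : Fin d, ‖fderiv ℝ Ψ x (dir d N i j)‖ ^ 2

/-- The potential energy `(N-1)⁻¹ ∑_{i<j} ∫_{[0,1]^{dN}} v(x_i - x_j)|Ψ|² dx`. -/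
def potentialEnergy (d N : ℕ) (v : (Fin d → ℝ) → ℝ) (Ψ : (Fin N → Fin d → ℝ) → ℂ) : ℝ :=
  ((N : ℝ) - 1)⁻¹ * ∑ i : Fin N, ∑ j : Fin N,
    if i < j then ∫ x in boxN d N, v (x i - x j) * ‖Ψ x‖ ^ 2 else 0

/-- The energy form `E_N(Ψ)`. -/
def energyForm (d N : ℕ) (v : (Fin d → ℝ) → ℝ) (Ψ : (Fin N → Fin d → ℝ) → ℂ) : ℝ :=
  kineticEnergy d N Ψ + potentialEnergy d N v Ψ

/-- The ground state energy `E₀(N)`: the infimum of the energy form over smooth,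
periodic, permutation-symmetric, normalized wave functions. -/
def E0 (d N : ℕ) (v : (Fin d → ℝ) → ℝ) : ℝ :=
  sInf {E : ℝ | ∃ Ψ : (Fin N → Fin d → ℝ) → ℂ, ContDiff ℝ (⊤ : ℕ∞) Ψ ∧ PeriodicWF d N Ψ ∧
    SymmetricWF d N Ψ ∧ Normalized d N Ψ ∧ E = energyForm d N v Ψ}

/-- The elementary excitation energy `e_p = √(|p|⁴ + 2|p|²v̂(p))` for `p = 2πk`. -/
def excitation (d : ℕ) (vhat : (Fin d → ℤ) → ℝ) (k : Fin d → ℤ) : ℝ :=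
  Real.sqrt ((pSq d k) ^ 2 + 2 * pSq d k * vhat k)

/-- The Bogoliubov energy `E^Bog = -(1/2)∑_{p≠0}(|p|² + v̂(p) - e_p)`. -/
def Ebog (d : ℕ) (vhat : (Fin d → ℤ) → ℝ) : ℝ :=
  -(1 / 2) * ∑' k : {k : Fin d → ℤ // k ≠ 0},
    (pSq d k.1 + vhat k.1 - excitation d vhat k.1)

/-- `Q_iΨ`: the wave function minus its average over the `i`-th variable. -/
def Qproj (d N : ℕ) (i : Fin N) (Ψ : (Fin N → Fin d → ℝ) → ℂ) :
    (Fin N → Fin d → ℝ) → ℂ :=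
  fun x => Ψ x - ∫ y in boxd d, Ψ (Function.update x i y)

/-- The Hamiltonian `H_N` acting pointwise on smooth wave functions:
`(H_NΨ)(x) = -∑_j Δ_{x_j}Ψ(x) + (N-1)⁻¹∑_{i<j} v(x_i-x_j)Ψ(x)`. -/
def HamOp (d N : ℕ) (v : (Fin d → ℝ) → ℝ) (Ψ : (Fin N → Fin d → ℝ) → ℂ) :
    (Fin N → Fin d → ℝ) → ℂ :=
  fun x =>
    -(∑ i : Fin N, ∑ j : Fin d,
        fderiv ℝ (fun y => fderiv ℝ Ψ y (dir d N i j)) x (dir d N i j)) +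
    (((N : ℝ) - 1)⁻¹ : ℝ) * ∑ i : Fin N, ∑ j : Fin N,
      if i < j then (v (x i - x j) : ℂ) * Ψ x else 0

/-! ### The averaging projections -/

/-- The average of `f` over the `i`-th variable. -/
def avg {d N : ℕ} (i : Fin N) (f : (Fin N → Fin d → ℝ) → ℂ) : (Fin N → Fin d → ℝ) → ℂ :=
  fun x => ∫ y in boxd d, f (Function.update x i y)

/-- The `L²` inner product on the box. -/
def ip {d N : ℕ} (f g : (Fin N → Fin d → ℝ) → ℂ) : ℂ :=
  ∫ x in boxN d N, (starRingEnd ℂ) (f x) * g x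

lemma isCompact_boxd (d : ℕ) : IsCompact (boxd d) :=
  isCompact_univ_pi fun _ => isCompact_Icc

lemma isCompact_boxN (d N : ℕ) : IsCompact (boxN d N) :=
  isCompact_univ_pi fun _ => isCompact_univ_pi fun _ => isCompact_Icc

lemma restrict_boxN (d N : ℕ) :
    (volume : Measure (Fin N → Fin d → ℝ)).restrict (boxN d N) =
      Measure.pi fun _ => (volume : Measure (Fin d → ℝ)).restrict (boxd d) :=
  Measure.restrict_pi_pi _ _

lemma restrict_boxd (d : ℕ) :
    (volume : Measure (Fin d → ℝ)).restrict (boxd d) =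
      Measure.pi fun _ => (volume : Measure ℝ).restrict (Set.Icc 0 1) :=
  Measure.restrict_pi_pi _ _

instance isProbabilityMeasure_restrict_Icc :
    IsProbabilityMeasure ((volume : Measure ℝ).restrict (Set.Icc 0 1)) :=
  ⟨by simp⟩

instance isProbabilityMeasure_restrict_boxd (d : ℕ) :
    IsProbabilityMeasure ((volume : Measure (Fin d → ℝ)).restrict (boxd d)) := by
  rw [restrict_boxd]; infer_instance

instance isProbabilityMeasure_restrict_boxN (d N : ℕ) :
    IsProbabilityMeasure ((volume : Measure (Fin N → Fin d → ℝ)).restrict (boxN d N)) := by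
  rw [restrict_boxN]; infer_instance

section Basic

variable {d N : ℕ} {E : Type*} [NormedAddCommGroup E]

lemma integrable_boxN {f : (Fin N → Fin d → ℝ) → E} (hf : Continuous f) :
    Integrable f (volume.restrict (boxN d N)) :=
  hf.continuousOn.integrableOn_compact (isCompact_boxN d N)

lemma integrable_boxd {f : (Fin d → ℝ) → E} (hf : Continuous f) :
    Integrable f (volume.restrict (boxd d)) :=
  hf.continuousOn.integrableOn_compact (isCompact_boxd d)

lemma continuous_integral_boxd {Y : Type*} [TopologicalSpace Y] [FirstCountableTopology Y]
    [LocallyCompactSpace Y] [NormedSpace ℝ E] {f : Y → (Fin d → ℝ) → E}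
    (hf : Continuous f.uncurry) :
    Continuous fun x => ∫ y in boxd d, f x y :=
  continuous_parametric_integral_of_continuous hf (isCompact_boxd d)

lemma integral_integral_boxd_swap [NormedSpace ℝ E] {f : (Fin d → ℝ) → (Fin d → ℝ) → E}
    (hf : Continuous f.uncurry) :
    ∫ x in boxd d, ∫ y in boxd d, f x y = ∫ y in boxd d, ∫ x in boxd d, f x y := by
  apply integral_integral_swap
  rw [Measure.prod_restrict]
  exact hf.continuousOn.integrableOn_compact ((isCompact_boxd d).prod (isCompact_boxd d))

lemma integral_boxN_insertNth [NormedSpace ℝ E] {n : ℕ} (i : Fin (n + 1))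
    {f : (Fin (n + 1) → Fin d → ℝ) → E} (hf : Continuous f) :
    ∫ x in boxN d (n + 1), f x =
      ∫ r in boxN d n, ∫ a in boxd d, f (i.insertNth (α := fun _ => Fin d → ℝ) a r) := by
  have hm := (measurePreserving_piFinSuccAbove
    (fun _ : Fin (n + 1) => (volume : Measure (Fin d → ℝ)).restrict (boxd d)) i).symm
  rw [restrict_boxN, ← hm.integral_comp (MeasurableEquiv.measurableEmbedding _) f,
    ← restrict_boxN, integral_prod_symm]
  · rfl
  · rw [Measure.prod_restrict]
    refine ContinuousOn.integrableOn_compact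
      ((isCompact_boxd d).prod (isCompact_boxN d n)) (Continuous.continuousOn ?_)
    exact hf.comp (Continuous.finInsertNth (A := fun _ => Fin d → ℝ) i continuous_fst
      continuous_snd)

/-- Exchanging the `i`-th variable with an independent copy preserves the integral. -/
lemma integral_update_swap [NormedSpace ℝ E] (i : Fin N)
    {G : (Fin N → Fin d → ℝ) → (Fin d → ℝ) → E} (hG : Continuous G.uncurry) :
    ∫ x in boxN d N, ∫ y in boxd d, G x y =
      ∫ x in boxN d N, ∫ y in boxd d, G (Function.update x i y) (x i) := by
  obtain _ | n := N
  · exact i.elim0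
  have h1 : Continuous fun x => ∫ y in boxd d, G x y := continuous_integral_boxd hG
  have h2 : Continuous fun x => ∫ y in boxd d, G (Function.update x i y) (x i) := by
    apply continuous_integral_boxd
    exact hG.comp ((continuous_fst.update i continuous_snd).prodMk
      ((continuous_apply i).comp continuous_fst))
  rw [integral_boxN_insertNth i h1, integral_boxN_insertNth i h2]
  congr 1
  ext r
  simp only [Fin.update_insertNth, Fin.insertNth_apply_same]
  apply integral_integral_boxd_swap (f := fun a y => G (i.insertNth a r) y)
  exact hG.comp ((continuous_fst.finInsertNth i continuous_const).prodMk continuous_snd)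

end Basic

section Avg

variable {d N : ℕ} {f g : (Fin N → Fin d → ℝ) → ℂ}

lemma continuous_update_uncurry (i : Fin N) :
    Continuous fun p : (Fin N → Fin d → ℝ) × (Fin d → ℝ) => Function.update p.1 i p.2 :=
  continuous_fst.update i continuous_snd

lemma continuous_avg (i : Fin N) (hf : Continuous f) : Continuous (avg i f) :=
  continuous_integral_boxd (f := fun x y => f (Function.update x i y))
    (hf.comp (continuous_update_uncurry i))

lemma integral_avg_mul (i : Fin N) (hf : Continuous f) (hg : Continuous g) :
    ∫ x in boxN d N, avg i f x * g x = ∫ x in boxN d N, f x * avg i g x := by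
  have h := integral_update_swap (d := d) i
    (G := fun x y => f (Function.update x i y) * g x)
    ((hf.comp (continuous_update_uncurry i)).mul (hg.comp continuous_fst))
  simpa [avg, integral_mul_const, integral_const_mul] using h

lemma integral_avg (i : Fin N) (hf : Continuous f) :
    ∫ x in boxN d N, avg i f x = ∫ x in boxN d N, f x := by
  have h := integral_avg_mul i hf (g := fun _ => 1) continuous_const
  simpa [avg] using h

lemma avg_update (i : Fin N) (x : Fin N → Fin d → ℝ) (y : Fin d → ℝ) :
    avg i f (Function.update x i y) = avg i f x := by
  simp [avg]

lemma avg_mul_of_indep (i : Fin N) (hg : ∀ x y, g (Function.update x i y) = g x) :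
    avg i (fun x => g x * f x) = fun x => g x * avg i f x := by
  ext x
  simp [avg, hg, integral_const_mul]

lemma avg_of_indep (i : Fin N) (hg : ∀ x y, g (Function.update x i y) = g x) :
    avg i g = g := by
  ext x
  simp [avg, hg]

lemma avg_avg (i : Fin N) : avg i (avg i f) = avg i f :=
  avg_of_indep i (avg_update i)

lemma avg_comm (i j : Fin N) (hf : Continuous f) : avg i (avg j f) = avg j (avg i f) := by
  obtain rfl | hij := eq_or_ne i j
  · rfl
  ext x
  simp only [avg]
  rw [integral_integral_boxd_swap]
  · simp only [Function.update_comm hij]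
  · apply hf.comp
    have h1 : Continuous fun p : (Fin d → ℝ) × (Fin d → ℝ) => Function.update x i p.1 :=
      continuous_const.update i continuous_fst
    exact h1.update j continuous_snd

lemma avg_conj (i : Fin N) :
    avg i (fun x => (starRingEnd ℂ) (f x)) = fun x => (starRingEnd ℂ) (avg i f x) := by
  ext x
  exact integral_conj

lemma avg_sub (i : Fin N) (hf : Continuous f) (hg : Continuous g) :
    avg i (fun x => f x - g x) = fun x => avg i f x - avg i g x := by
  ext x
  exact integral_sub (integrable_boxd (hf.comp (continuous_const.update i continuous_id)))
    (integrable_boxd (hg.comp (continuous_const.update i continuous_id)))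

lemma avg_comp_swap (i j : Fin N) :
    avg j (fun x => f (fun a => x (Equiv.swap i j a))) =
      fun x => avg i f (fun a => x (Equiv.swap i j a)) := by
  ext x
  simp only [avg]
  congr 1
  ext y
  congr 1
  ext a
  have : Equiv.swap i j a = j ↔ a = i := by
    rw [Equiv.swap_apply_eq_iff, Equiv.swap_apply_right]
  simp only [Function.update_apply, this]

lemma Qproj_eq (i : Fin N) : Qproj d N i f = fun x => f x - avg i f x := rfl

lemma continuous_Qproj (i : Fin N) (hf : Continuous f) : Continuous (Qproj d N i f) :=
  hf.sub (continuous_avg i hf)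

lemma avg_Qproj (i : Fin N) (hf : Continuous f) : avg i (Qproj d N i f) = 0 := by
  rw [Qproj_eq, avg_sub i hf (continuous_avg i hf), avg_avg]
  ext x; simp

lemma avg_Qproj_comm (i j : Fin N) (hf : Continuous f) :
    avg i (Qproj d N j f) = Qproj d N j (avg i f) := by
  rw [Qproj_eq, Qproj_eq, avg_sub i hf (continuous_avg j hf), avg_comm i j hf]

end Avg

section InnerProduct

variable {d N : ℕ} {f g h : (Fin N → Fin d → ℝ) → ℂ}

lemma continuous_conj_mul (hf : Continuous f) (hg : Continuous g) :
    Continuous fun x => (starRingEnd ℂ) (f x) * g x :=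
  (Complex.continuous_conj.comp hf).mul hg

lemma ip_add_right (hf : Continuous f) (hg : Continuous g) (hh : Continuous h) :
    ip f (fun x => g x + h x) = ip f g + ip f h := by
  simp only [ip, mul_add]
  exact integral_add (integrable_boxN (continuous_conj_mul hf hg))
    (integrable_boxN (continuous_conj_mul hf hh))

lemma ip_sub_right (hf : Continuous f) (hg : Continuous g) (hh : Continuous h) :
    ip f (fun x => g x - h x) = ip f g - ip f h := by
  simp only [ip, mul_sub]
  exact integral_sub (integrable_boxN (continuous_conj_mul hf hg))
    (integrable_boxN (continuous_conj_mul hf hh))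

lemma ip_conj : (starRingEnd ℂ) (ip f g) = ip g f := by
  simp only [ip, ← integral_conj]
  congr 1
  ext x
  simp [mul_comm]

lemma ip_sub_left (hf : Continuous f) (hg : Continuous g) (hh : Continuous h) :
    ip (fun x => f x - g x) h = ip f h - ip g h := by
  rw [← ip_conj, ip_sub_right hh hf hg, map_sub, ip_conj, ip_conj]

lemma ip_const_mul_right (c : ℂ) : ip f (fun x => c * g x) = c * ip f g := by
  simp only [ip, ← integral_const_mul]
  congr 1
  ext x
  ring

lemma ip_sum_right {ι : Type*} (s : Finset ι) {G : ι → (Fin N → Fin d → ℝ) → ℂ}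
    (hf : Continuous f) (hG : ∀ i ∈ s, Continuous (G i)) :
    ip f (fun x => ∑ i ∈ s, G i x) = ∑ i ∈ s, ip f (G i) := by
  simp only [ip, Finset.mul_sum]
  exact integral_finsetSum s fun i hi => integrable_boxN (continuous_conj_mul hf (hG i hi))

lemma ip_sum_left {ι : Type*} (s : Finset ι) {G : ι → (Fin N → Fin d → ℝ) → ℂ}
    (hf : Continuous f) (hG : ∀ i ∈ s, Continuous (G i)) :
    ip (fun x => ∑ i ∈ s, G i x) f = ∑ i ∈ s, ip (G i) f := by
  rw [← ip_conj, ip_sum_right s hf hG, map_sum]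
  simp only [ip_conj]

lemma ip_self : ip f f = ((∫ x in boxN d N, ‖f x‖ ^ 2 : ℝ) : ℂ) := by
  rw [ip, ← integral_complex_ofReal]
  congr 1
  ext x
  rw [← Complex.normSq_eq_conj_mul_self, Complex.normSq_eq_norm_sq]

lemma ip_self_re : (ip f f).re = ∫ x in boxN d N, ‖f x‖ ^ 2 := by
  rw [ip_self, Complex.ofReal_re]

lemma ip_self_re_nonneg : 0 ≤ (ip f f).re := by
  rw [ip_self_re]
  exact integral_nonneg fun x => by positivity

lemma ip_avg_left (i : Fin N) (hf : Continuous f) (hg : Continuous g) :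
    ip (avg i f) g = ip f (avg i g) := by
  have := integral_avg_mul i (Complex.continuous_conj.comp hf) hg
  simpa [ip, avg_conj, Function.comp_def] using this

lemma ip_Qproj_left (i : Fin N) (hf : Continuous f) (hg : Continuous g) :
    ip (Qproj d N i f) g = ip f (Qproj d N i g) := by
  rw [Qproj_eq, Qproj_eq, ip_sub_left hf (continuous_avg i hf) hg,
    ip_sub_right hf hg (continuous_avg i hg), ip_avg_left i hf hg]

lemma ip_Qproj_avg (i : Fin N) (hf : Continuous f) (hg : Continuous g) :
    ip (Qproj d N i f) (avg i g) = 0 := by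
  rw [← ip_avg_left i (continuous_Qproj i hf) hg, avg_Qproj i hf]
  simp [ip]

lemma norm_ip_le_integral : ‖ip f g‖ ≤ ∫ x in boxN d N, ‖f x‖ * ‖g x‖ := by
  refine (norm_integral_le_integral_norm _).trans_eq ?_
  simp

lemma integral_norm_mul_le (hf : Continuous f) (hg : Continuous g) :
    ∫ x in boxN d N, ‖f x‖ * ‖g x‖ ≤ √(ip f f).re * √(ip g g).re := by
  have hm : ∀ {u : (Fin N → Fin d → ℝ) → ℂ}, Continuous u →
      MemLp u (ENNReal.ofReal 2) (volume.restrict (boxN d N)) := by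
    intro u hu
    obtain ⟨C, hC⟩ := (isCompact_boxN d N).exists_bound_of_continuousOn hu.continuousOn
    refine MemLp.of_bound hu.aestronglyMeasurable C ?_
    exact (ae_restrict_iff' (isCompact_boxN d N).measurableSet).2 (Filter.Eventually.of_forall hC)
  have := integral_mul_norm_le_Lp_mul_Lq Real.HolderConjugate.two_two (hm hf) (hm hg)
  simpa [ip_self_re, Real.sqrt_eq_rpow] using this

lemma norm_ip_le (hf : Continuous f) (hg : Continuous g) :
    ‖ip f g‖ ≤ √(ip f f).re * √(ip g g).re :=
  norm_ip_le_integral.trans (integral_norm_mul_le hf hg)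

/-- Cauchy–Schwarz with a bounded weight. -/
lemma norm_ip_weight_le {w : (Fin N → Fin d → ℝ) → ℝ} {C : ℝ} (hC : ∀ x, |w x| ≤ C)
    (hw : Continuous w) (hf : Continuous f) (hg : Continuous g) :
    ‖ip f (fun x => (w x : ℂ) * g x)‖ ≤ C * (√(ip f f).re * √(ip g g).re) := by
  have hC0 : 0 ≤ C := (abs_nonneg _).trans (hC 0)
  refine norm_ip_le_integral.trans ?_
  refine le_trans ?_ (mul_le_mul_of_nonneg_left (integral_norm_mul_le hf hg) hC0)
  rw [← integral_const_mul]
  refine integral_mono (integrable_boxN ?_) (integrable_boxN ?_) fun x => ?_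
  · fun_prop
  · fun_prop
  · simp only [norm_mul, Complex.norm_real, Real.norm_eq_abs]
    have := hC x
    have h0 : 0 ≤ ‖f x‖ * ‖g x‖ := by positivity
    nlinarith [mul_le_mul_of_nonneg_right this h0]

end InnerProduct

section UnitTorus

attribute [local instance] instMeasureSpaceUnitAddCircle

lemma isAddHaarMeasure_unitAddCircle :
    Measure.IsAddHaarMeasure (volume : Measure UnitAddCircle) :=
  inferInstanceAs (Measure.IsAddHaarMeasure AddCircle.haarAddCircle)

attribute [local instance] isAddHaarMeasure_unitAddCircle

lemma isProbabilityMeasure_unitAddCircle :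
    IsProbabilityMeasure (volume : Measure UnitAddCircle) :=
  inferInstanceAs (IsProbabilityMeasure AddCircle.haarAddCircle)

attribute [local instance] isProbabilityMeasure_unitAddCircle

/-! ### Periodic functions on the unit box -/

section Periodic

variable {d : ℕ}

/-- A function on `ℝ^d` which is 1-periodic in each coordinate. -/
def PeriodicFun {E : Type*} (h : (Fin d → ℝ) → E) : Prop :=
  ∀ (x : Fin d → ℝ) (k : Fin d → ℤ), h (fun j => x j + (k j : ℝ)) = h x

lemma Ioc_pi_ae_eq_boxd (d : ℕ) :
    {x : Fin d → ℝ | ∀ i, x i ∈ Set.Ioc (0 : ℝ) (0 + 1)} =ᵐ[volume] boxd d := by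
  have : {x : Fin d → ℝ | ∀ i, x i ∈ Set.Ioc (0 : ℝ) (0 + 1)} =
      Set.univ.pi fun _ => Set.Ioc (0 : ℝ) 1 := by
    ext x; simp
  rw [this]
  exact Measure.univ_pi_Ioc_ae_eq_Icc.trans (by simp [boxd, Set.pi_univ_Icc]; rfl)

/-- The representative in `(0,1]^ι` of a point of the torus. -/
def torusRep {ι : Type*} (t : UnitAddTorus ι) : ι → ℝ :=
  fun l => (AddCircle.equivIoc 1 0 (t l)).1

lemma torusRep_coe_mem {ι : Type*} (t : UnitAddTorus ι) (l : ι) :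
    torusRep t l ∈ Set.Ioc (0 : ℝ) 1 := by
  simpa [torusRep] using (AddCircle.equivIoc (1 : ℝ) 0 (t l)).2

lemma torusRep_coe_of_mem {ι : Type*} {x : ι → ℝ} (hx : ∀ l, x l ∈ Set.Ioc (0 : ℝ) (0 + 1)) :
    torusRep (fun l => (x l : UnitAddCircle)) = x := by
  ext l
  exact AddCircle.equivIoc_coe_of_mem (p := (1 : ℝ)) (hx l)

lemma measurable_torusRep {ι : Type*} : Measurable (torusRep (ι := ι)) := by
  refine measurable_pi_lambda _ fun l => ?_
  exact measurable_subtype_coe.comp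
    ((AddCircle.measurableEquivIoc (1 : ℝ) 0).measurable.comp (measurable_pi_apply l))

lemma PeriodicFun.torusRep_coe {E : Type*} {h : (Fin d → ℝ) → E} (hp : PeriodicFun h)
    (x : Fin d → ℝ) : h (torusRep fun l => (x l : UnitAddCircle)) = h x := by
  have : ∀ l, ∃ n : ℤ, x l + n = torusRep (fun l => (x l : UnitAddCircle)) l := by
    intro l
    refine ⟨-toIocDiv one_pos 0 (x l), ?_⟩
    simp only [torusRep, AddCircle.equivIoc, QuotientAddGroup.equivIocMod_coe]
    rw [toIocMod]
    simp [sub_eq_add_neg]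
  choose n hn using this
  rw [← hp x n]
  congr 1
  ext l
  exact (hn l).symm

lemma PeriodicFun.integral_add_const {E : Type*} [NormedAddCommGroup E] [NormedSpace ℝ E]
    {h : (Fin d → ℝ) → E} (hp : PeriodicFun h) (c : Fin d → ℝ) :
    ∫ y in boxd d, h (y + c) = ∫ y in boxd d, h y := by
  have key : ∀ g : (Fin d → ℝ) → E, PeriodicFun g →
      ∫ y in boxd d, g y = ∫ t : UnitAddTorus (Fin d), g (torusRep t) := by
    intro g hg
    rw [UnitAddTorus.integral_preimage _ 0, setIntegral_congr_set (Ioc_pi_ae_eq_boxd d).symm]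
    simp only [hg.torusRep_coe, Pi.zero_apply]
  rw [key h hp, key (fun y => h (y + c))
    (by intro x k; simpa [Pi.add_def, add_right_comm] using hp (x + c) k)]
  rw [← integral_add_right_eq_self (fun t => h (torusRep t))
    (fun l => (c l : UnitAddCircle) : UnitAddTorus (Fin d))]
  congr 1
  ext t
  rw [← hp.torusRep_coe]
  congr 2
  ext l
  have : ((torusRep t l : ℝ) : UnitAddCircle) = t l :=
    (AddCircle.equivIoc (1 : ℝ) 0).symm_apply_apply (t l)
  simp [this]

/-- The integral of a derivative of a periodic function vanishes. -/
lemma PeriodicFun.integral_fderiv_eq_zero {g : (Fin d → ℝ) → ℂ} (hp : PeriodicFun g)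
    (hg : ContDiff ℝ 1 g) (l : Fin d) :
    ∫ y in boxd d, fderiv ℝ g y (Pi.single l 1) = 0 := by
  set h : (Fin d → ℝ) → ℂ := fun y => fderiv ℝ g y (Pi.single l 1) with hh
  have hc : Continuous h := (hg.continuous_fderiv one_ne_zero).clm_apply continuous_const
  have hph : PeriodicFun h := by
    intro x k
    have : (fun y : Fin d → ℝ => g (y + fun j => (k j : ℝ))) = g := by
      ext y; exact hp y k
    simp only [hh]
    conv_rhs => rw [← this, fderiv_comp_add_right]
    rfl
  have h0 : ∀ y : Fin d → ℝ, ∫ t in (0 : ℝ)..1, h (y + t • Pi.single l 1) = 0 := by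
    intro y
    have hd : ∀ t ∈ Set.uIcc (0 : ℝ) 1, HasDerivAt (fun t : ℝ => g (y + t • Pi.single l 1))
        (h (y + t • Pi.single l 1)) t := by
      intro t _
      have h1 : HasDerivAt (fun t : ℝ => y + t • (Pi.single l 1 : Fin d → ℝ))
          (Pi.single l 1) t := by
        simpa using ((hasDerivAt_id t).smul_const (Pi.single l 1 : Fin d → ℝ)).const_add y
      exact ((hg.differentiable one_ne_zero _).hasFDerivAt).comp_hasDerivAt t h1
    rw [intervalIntegral.integral_eq_sub_of_hasDerivAt hd]
    · have := hp y (Pi.single l 1)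
      have e : (fun j => y j + ((Pi.single l 1 : Fin d → ℤ) j : ℝ)) =
          y + (1 : ℝ) • Pi.single l 1 := by
        ext j
        by_cases hj : j = l
        · subst hj; simp
        · simp [hj]
      rw [← e, this]
      simp
    · refine Continuous.intervalIntegrable ?_ _ _
      fun_prop
  have h1 : ∫ y in boxd d, ∫ t in Set.Ioc (0 : ℝ) 1, h (y + t • Pi.single l 1) = 0 := by
    simp [← intervalIntegral.integral_of_le zero_le_one, h0]
  rw [integral_integral_swap] at h1
  · simpa [hph.integral_add_const] using h1
  · rw [Measure.prod_restrict]
    refine IntegrableOn.mono_set (t := boxd d ×ˢ Set.Icc 0 1) ?_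
      (Set.prod_mono_right Set.Ioc_subset_Icc_self)
    refine ContinuousOn.integrableOn_compact ((isCompact_boxd d).prod isCompact_Icc)
      (Continuous.continuousOn ?_)
    simp only [Function.uncurry_def]
    fun_prop

end Periodic

/-! ### Plane waves -/

section PlaneWave

variable {d N : ℕ}

/-- The plane wave `e^{ip·y}` for `p = 2πk`. -/
def planeWave (k : Fin d → ℤ) (y : Fin d → ℝ) : ℂ :=
  Complex.exp (Complex.I * ∑ j, (2 * π * (k j : ℝ)) * y j)

/-- The plane wave on configuration space. -/
def planeWaveN (k : Fin N → Fin d → ℤ) (x : Fin N → Fin d → ℝ) : ℂ :=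
  ∏ i, planeWave (k i) (x i)

lemma contDiff_planeWave (k : Fin d → ℤ) : ContDiff ℝ (⊤ : ℕ∞) (planeWave k) := by
  have h : ContDiff ℝ (⊤ : ℕ∞) fun y : Fin d → ℝ => ∑ j, (2 * π * (k j : ℝ)) * y j := by
    fun_prop
  exact (contDiff_const.mul (Complex.ofRealCLM.contDiff.comp h)).cexp

lemma continuous_planeWave (k : Fin d → ℤ) : Continuous (planeWave k) :=
  (contDiff_planeWave k).continuous

lemma contDiff_planeWaveN (k : Fin N → Fin d → ℤ) : ContDiff ℝ (⊤ : ℕ∞) (planeWaveN k) :=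
  contDiff_prod fun i _ => (contDiff_planeWave (k i)).comp (contDiff_apply ℝ _ i)

lemma continuous_planeWaveN (k : Fin N → Fin d → ℤ) : Continuous (planeWaveN k) :=
  (contDiff_planeWaveN k).continuous

lemma planeWave_neg (k : Fin d → ℤ) (y : Fin d → ℝ) :
    planeWave (-k) y = (starRingEnd ℂ) (planeWave k y) := by
  rw [planeWave, planeWave, ← Complex.exp_conj, map_mul, Complex.conj_I, Complex.conj_ofReal]
  simp

lemma planeWave_add (k : Fin d → ℤ) (x y : Fin d → ℝ) :
    planeWave k (x + y) = planeWave k x * planeWave k y := by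
  simp [planeWave, ← Complex.exp_add, mul_add, Finset.sum_add_distrib]

lemma planeWave_sub (k : Fin d → ℤ) (x y : Fin d → ℝ) :
    planeWave k (x - y) = planeWave k x * (starRingEnd ℂ) (planeWave k y) := by
  rw [sub_eq_add_neg, planeWave_add, ← planeWave_neg]
  simp [planeWave]

lemma norm_planeWave (k : Fin d → ℤ) (y : Fin d → ℝ) : ‖planeWave k y‖ = 1 := by
  rw [planeWave, mul_comm, Complex.norm_exp_ofReal_mul_I]

lemma planeWave_zero_left (y : Fin d → ℝ) : planeWave 0 y = 1 := by simp [planeWave]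

lemma planeWave_zero_right (k : Fin d → ℤ) : planeWave k 0 = 1 := by simp [planeWave]

lemma planeWave_int (k m : Fin d → ℤ) : planeWave k (fun j => (m j : ℝ)) = 1 := by
  rw [planeWave, Complex.exp_eq_one_iff]
  refine ⟨∑ j, k j * m j, ?_⟩
  push_cast
  rw [Finset.mul_sum, Finset.sum_mul]
  refine Finset.sum_congr rfl fun j _ => ?_
  ring

lemma periodic_planeWave (k : Fin d → ℤ) : PeriodicFun (planeWave k) := by
  intro x m
  rw [show (fun j => x j + (m j : ℝ)) = x + fun j => (m j : ℝ) from rfl, planeWave_add,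
    planeWave_int, mul_one]

lemma planeWave_single (k : Fin d → ℤ) (l : Fin d) (t : ℝ) :
    planeWave k (t • Pi.single l 1) = Complex.exp (2 * π * Complex.I * k l * t) := by
  rw [planeWave, Finset.sum_eq_single l]
  · congr 1
    simp
    ring
  · intro j _ hj
    simp [hj]
  · simp

lemma fderiv_planeWave (k : Fin d → ℤ) (y : Fin d → ℝ) (l : Fin d) :
    fderiv ℝ (planeWave k) y (Pi.single l 1) = 2 * π * Complex.I * k l * planeWave k y := by
  rw [← ((contDiff_planeWave k).differentiable (by simp) y).lineDeriv_eq_fderiv]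
  simp only [lineDeriv, planeWave_add, planeWave_single]
  have h1 : HasDerivAt (fun t : ℝ => (2 * π * Complex.I * k l * t : ℂ))
      (2 * π * Complex.I * k l) 0 := by
    simpa using ((hasDerivAt_id (0 : ℝ)).ofReal_comp).const_mul (2 * π * Complex.I * k l)
  simpa [mul_comm] using (h1.cexp.const_mul (planeWave k y)).deriv

lemma integral_planeWave (k : Fin d → ℤ) :
    ∫ y in boxd d, planeWave k y = if k = 0 then 1 else 0 := by
  split_ifs with hk
  · subst hk
    simp [planeWave_zero_left]
  · obtain ⟨l, hl⟩ := Function.ne_iff.1 hk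
    have := (periodic_planeWave k).integral_fderiv_eq_zero
      ((contDiff_planeWave k).of_le (by norm_cast)) l
    simp only [fderiv_planeWave, integral_const_mul, mul_eq_zero] at this
    have h2 : (k l : ℂ) ≠ 0 := by exact_mod_cast hl
    simpa [h2, pi_ne_zero] using this

lemma avg_planeWaveN (i : Fin N) (k : Fin N → Fin d → ℤ) :
    avg i (planeWaveN k) = fun x => if k i = 0 then planeWaveN k x else 0 := by
  ext x
  simp only [avg, planeWaveN]
  have h1 : ∀ y : Fin d → ℝ, ∏ a, planeWave (k a) (Function.update x i y a) =
      planeWave (k i) y * ∏ a ∈ Finset.univ.erase i, planeWave (k a) (x a) := by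
    intro y
    rw [← Finset.mul_prod_erase _ _ (Finset.mem_univ i), Function.update_self]
    congr 1
    refine Finset.prod_congr rfl fun a ha => ?_
    rw [Function.update_of_ne (Finset.ne_of_mem_erase ha)]
  simp only [h1, integral_mul_const, integral_planeWave]
  split_ifs with hk
  · rw [← Finset.mul_prod_erase _ _ (Finset.mem_univ i), hk, planeWave_zero_left]
  · simp

lemma ip_planeWaveN_avg {f : (Fin N → Fin d → ℝ) → ℂ} (i : Fin N) (k : Fin N → Fin d → ℤ)
    (hf : Continuous f) :
    ip (planeWaveN k) (avg i f) = if k i = 0 then ip (planeWaveN k) f else 0 := by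
  rw [← ip_avg_left i (continuous_planeWaveN k) hf, avg_planeWaveN]
  split_ifs <;> simp [ip]

lemma planeWaveN_update (k : Fin N → Fin d → ℤ) (x : Fin N → Fin d → ℝ) (i : Fin N)
    (y : Fin d → ℝ) : planeWaveN k (x + Pi.single i y) = planeWaveN k x * planeWave (k i) y := by
  simp only [planeWaveN, Pi.add_apply, planeWave_add, Finset.prod_mul_distrib]
  congr 1
  rw [Finset.prod_eq_single i]
  · simp
  · intro j _ hj
    simp [hj, planeWave_zero_right]
  · simp

lemma fderiv_planeWaveN (k : Fin N → Fin d → ℤ) (x : Fin N → Fin d → ℝ) (i : Fin N) (l : Fin d) :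
    fderiv ℝ (planeWaveN k) x (dir d N i l) = 2 * π * Complex.I * k i l * planeWaveN k x := by
  rw [← ((contDiff_planeWaveN k).differentiable (by simp) x).lineDeriv_eq_fderiv]
  have h0 : ∀ t : ℝ, t • dir d N i l = Pi.single i (t • Pi.single l 1) := by
    intro t
    rw [dir, Pi.single_smul']
  simp only [lineDeriv, h0, planeWaveN_update, planeWave_single]
  have h1 : HasDerivAt (fun t : ℝ => (2 * π * Complex.I * k i l * t : ℂ))
      (2 * π * Complex.I * k i l) 0 := by
    simpa using ((hasDerivAt_id (0 : ℝ)).ofReal_comp).const_mul (2 * π * Complex.I * k i l)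
  simpa [mul_comm] using (h1.cexp.const_mul (planeWaveN k x)).deriv

lemma planeWaveN_neg (k : Fin N → Fin d → ℤ) (x : Fin N → Fin d → ℝ) :
    planeWaveN (-k) x = (starRingEnd ℂ) (planeWaveN k x) := by
  simp only [planeWaveN, Pi.neg_apply, planeWave_neg, map_prod]

lemma periodicWF_planeWaveN (k : Fin N → Fin d → ℤ) : PeriodicWF d N (planeWaveN k) := by
  intro x m
  exact Finset.prod_congr rfl fun i _ => periodic_planeWave (k i) (x i) (m i)

/-- The integral of a derivative of a periodic function vanishes. -/
lemma integral_fderiv_dir_eq_zero {G : (Fin N → Fin d → ℝ) → ℂ} (hp : PeriodicWF d N G)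
    (hG : ContDiff ℝ 1 G) (i : Fin N) (l : Fin d) :
    ∫ x in boxN d N, fderiv ℝ G x (dir d N i l) = 0 := by
  have hc : Continuous fun x => fderiv ℝ G x (dir d N i l) :=
    (hG.continuous_fderiv one_ne_zero).clm_apply continuous_const
  rw [← integral_avg i hc]
  refine integral_eq_zero_of_ae (Filter.Eventually.of_forall fun x => ?_)
  have hu : ContDiff ℝ 1 fun y : Fin d → ℝ => Function.update x i y := by
    exact contDiff_update 1 x i
  have hper : PeriodicFun fun y => G (Function.update x i y) := by
    intro y k
    change G _ = G _
    rw [← hp (Function.update x i y) (Pi.single i k)]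
    congr 1
    ext a b
    by_cases ha : a = i
    · subst ha; simp
    · simp [ha]
  have := hper.integral_fderiv_eq_zero (hG.comp hu) l
  simp only [Pi.zero_apply, avg]
  rw [← this]
  congr 1
  ext y
  have h1 := (hasFDerivAt_update x (i := i) y (𝕜 := ℝ))
  have h2 := ((hG.differentiable one_ne_zero _).hasFDerivAt.comp y h1).fderiv
  rw [Function.comp_def] at h2
  rw [h2]
  simp only [ContinuousLinearMap.comp_apply, dir]
  congr 1
  ext a
  by_cases ha : a = i
  · subst ha; simp
  · simp [ha]

lemma ip_planeWaveN_fderiv {f : (Fin N → Fin d → ℝ) → ℂ} (hp : PeriodicWF d N f)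
    (hf : ContDiff ℝ 1 f) (k : Fin N → Fin d → ℤ) (i : Fin N) (l : Fin d) :
    ip (planeWaveN k) (fun x => fderiv ℝ f x (dir d N i l)) =
      2 * π * Complex.I * k i l * ip (planeWaveN k) f := by
  have hpw : ContDiff ℝ 1 (planeWaveN (-k)) :=
    (contDiff_planeWaveN (-k)).of_le (by norm_cast)
  have h0 := integral_fderiv_dir_eq_zero (G := fun x => planeWaveN (-k) x * f x)
    (by intro x m; simp only [periodicWF_planeWaveN (-k) x m, hp x m]) (hpw.mul hf) i l
  have h1 : ∀ x, fderiv ℝ (fun x => planeWaveN (-k) x * f x) x (dir d N i l) =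
      (starRingEnd ℂ) (planeWaveN k x) * fderiv ℝ f x (dir d N i l) -
      2 * π * Complex.I * k i l * ((starRingEnd ℂ) (planeWaveN k x) * f x) := by
    intro x
    rw [fderiv_fun_mul (hpw.differentiable one_ne_zero x) (hf.differentiable one_ne_zero x)]
    simp only [add_apply, smul_apply, smul_eq_mul, fderiv_planeWaveN, planeWaveN_neg]
    simp
    ring
  simp only [h1] at h0
  have hc : Continuous fun x => fderiv ℝ f x (dir d N i l) :=
    (hf.continuous_fderiv one_ne_zero).clm_apply continuous_const
  rw [integral_sub (integrable_boxN (continuous_conj_mul (continuous_planeWaveN k) hc))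
    ((integrable_boxN (continuous_conj_mul (continuous_planeWaveN k) hf.continuous)).const_mul _),
    integral_const_mul, sub_eq_zero] at h0
  exact h0

end PlaneWave

/-! ### Parseval's identity on the box -/

section Parseval

variable {d N : ℕ}

lemma measurePreserving_uncurry (d N : ℕ) :
    MeasurePreserving (MeasurableEquiv.curry (Fin N) (Fin d) ℝ).symm
      ((volume : Measure (Fin N → Fin d → ℝ)).restrict (boxN d N))
      (Measure.pi fun _ => (volume : Measure ℝ).restrict (Set.Icc 0 1)) := by
  refine ⟨MeasurableEquiv.measurable _, ?_⟩
  symm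
  apply Measure.pi_eq
  intro s hs
  have : (MeasurableEquiv.curry (Fin N) (Fin d) ℝ).symm ⁻¹' Set.univ.pi s =
      Set.univ.pi fun i => Set.univ.pi fun j => s (i, j) := by
    ext x
    simp only [Set.mem_preimage, Set.mem_univ_pi, Prod.forall]
    rfl
  rw [MeasurableEquiv.map_apply, this, restrict_boxN, Measure.pi_pi, Fintype.prod_prod_type]
  refine Finset.prod_congr rfl fun i _ => ?_
  rw [restrict_boxd, Measure.pi_pi]

/-- The representative in the box of a point of the torus. -/
def torusRepN (t : UnitAddTorus (Fin N × Fin d)) : Fin N → Fin d → ℝ :=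
  fun i j => torusRep t (i, j)

lemma measurable_torusRepN : Measurable (torusRepN (d := d) (N := N)) :=
  measurable_pi_lambda _ fun i => measurable_pi_lambda _ fun j =>
    (measurable_pi_apply (i, j)).comp measurable_torusRep

lemma torusRepN_mem (t : UnitAddTorus (Fin N × Fin d)) : torusRepN t ∈ boxN d N :=
  fun i _ j _ => Set.Ioc_subset_Icc_self (torusRep_coe_mem t (i, j))

lemma integral_torusRepN {E : Type*} [NormedAddCommGroup E] [NormedSpace ℝ E]
    (h : (Fin N → Fin d → ℝ) → E) :
    ∫ t : UnitAddTorus (Fin N × Fin d), h (torusRepN t) = ∫ x in boxN d N, h x := by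
  have hset : {x : Fin N × Fin d → ℝ | ∀ i, x i ∈ Set.Ioc (0 : ℝ) (0 + 1)} =
      Set.univ.pi fun _ => Set.Ioc (0 : ℝ) 1 := by
    ext x; simp
  rw [UnitAddTorus.integral_preimage _ 0]
  simp only [Pi.zero_apply]
  have h1 : ∫ x in {x : Fin N × Fin d → ℝ | ∀ i, x i ∈ Set.Ioc (0 : ℝ) (0 + 1)},
      h (torusRepN fun l => (x l : UnitAddCircle)) =
      ∫ x in {x : Fin N × Fin d → ℝ | ∀ i, x i ∈ Set.Ioc (0 : ℝ) (0 + 1)},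
        h (MeasurableEquiv.curry (Fin N) (Fin d) ℝ x) := by
    refine setIntegral_congr_fun ?_ fun x hx => ?_
    · rw [hset]
      exact MeasurableSet.univ_pi fun _ => measurableSet_Ioc
    · have : torusRepN (fun l => (x l : UnitAddCircle)) =
          MeasurableEquiv.curry (Fin N) (Fin d) ℝ x := by
        ext i j
        exact congrFun (torusRep_coe_of_mem hx) (i, j)
      simp only [this]
  rw [h1, hset, volume_pi, Measure.restrict_pi_pi, Measure.restrict_congr_set Ioc_ae_eq_Icc,
    ← (measurePreserving_uncurry d N).integral_comp (MeasurableEquiv.measurableEmbedding _)]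
  rfl

lemma mFourier_eq_planeWaveN (k : Fin N → Fin d → ℤ) (t : UnitAddTorus (Fin N × Fin d)) :
    UnitAddTorus.mFourier (fun p => k p.1 p.2) t = planeWaveN k (torusRepN t) := by
  simp only [UnitAddTorus.mFourier, ContinuousMap.coe_mk, planeWaveN, planeWave]
  rw [Fintype.prod_prod_type]
  refine Finset.prod_congr rfl fun i _ => ?_
  push_cast
  rw [Finset.mul_sum, Complex.exp_sum]
  refine Finset.prod_congr rfl fun j _ => ?_
  have : t (i, j) = ((torusRep t (i, j) : ℝ) : UnitAddCircle) :=
    ((AddCircle.equivIoc (1 : ℝ) 0).symm_apply_apply (t (i, j))).symm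
  rw [this, fourier_coe_apply]
  congr 1
  simp only [torusRepN]
  push_cast
  ring

lemma memLp_comp_torusRepN {f : (Fin N → Fin d → ℝ) → ℂ} (hf : Continuous f) :
    MemLp (fun t => f (torusRepN t)) 2 (volume : Measure (UnitAddTorus (Fin N × Fin d))) := by
  obtain ⟨C, hC⟩ := (isCompact_boxN d N).exists_bound_of_continuousOn hf.continuousOn
  exact MemLp.of_bound (hf.measurable.comp measurable_torusRepN).aestronglyMeasurable C
    (Filter.Eventually.of_forall fun t => hC _ (torusRepN_mem t))

lemma mFourierCoeff_comp_torusRepN {f : (Fin N → Fin d → ℝ) → ℂ} (hf : Continuous f)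
    (k : Fin N → Fin d → ℤ) :
    UnitAddTorus.mFourierCoeff ((memLp_comp_torusRepN hf).toLp _) (fun p => k p.1 p.2) =
      ip (planeWaveN k) f := by
  rw [ip, ← integral_torusRepN]
  refine integral_congr_ae ?_
  filter_upwards [(memLp_comp_torusRepN hf).coeFn_toLp] with t ht
  rw [ht, UnitAddTorus.mFourier_neg, mFourier_eq_planeWaveN, smul_eq_mul]

/-- Parseval's identity. -/
lemma hasSum_ip {f g : (Fin N → Fin d → ℝ) → ℂ} (hf : Continuous f) (hg : Continuous g) :
    HasSum (fun k : Fin N → Fin d → ℤ =>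
      (starRingEnd ℂ) (ip (planeWaveN k) f) * ip (planeWaveN k) g) (ip f g) := by
  have h := UnitAddTorus.hasSum_prod_mFourierCoeff ((memLp_comp_torusRepN hf).toLp _)
    ((memLp_comp_torusRepN hg).toLp _)
  rw [← (Equiv.curry (Fin N) (Fin d) ℤ).symm.hasSum_iff] at h
  convert h using 1
  · ext k
    simp only [Function.comp_apply]
    rw [← mFourierCoeff_comp_torusRepN hf, ← mFourierCoeff_comp_torusRepN hg]
    rfl
  · rw [ip, ← integral_torusRepN]
    refine integral_congr_ae ?_
    filter_upwards [(memLp_comp_torusRepN hf).coeFn_toLp,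
      (memLp_comp_torusRepN hg).coeFn_toLp] with t h1 h2
    rw [h1, h2]

end Parseval

/-! ### Derivatives of the projected wave function -/

section Derivative

variable {d N : ℕ} {f : (Fin N → Fin d → ℝ) → ℂ}

/-- The linear map setting the `i`-th variable to zero. -/
def eraseVar (d : ℕ) {N : ℕ} (i : Fin N) : (Fin N → Fin d → ℝ) →L[ℝ] (Fin N → Fin d → ℝ) :=
  ContinuousLinearMap.id ℝ _ -
    (ContinuousLinearMap.single ℝ (fun _ => Fin d → ℝ) i).comp (ContinuousLinearMap.proj i)

lemma eraseVar_add_single (i : Fin N) (x : Fin N → Fin d → ℝ) (y : Fin d → ℝ) :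
    eraseVar d i x + Pi.single i y = Function.update x i y := by
  ext a b
  by_cases ha : a = i
  · subst ha; simp [eraseVar]
  · simp [eraseVar, ha]

lemma eraseVar_dir (i j : Fin N) (l : Fin d) :
    eraseVar d i (dir d N j l) = if i = j then 0 else dir d N j l := by
  split_ifs with h
  · subst h
    simp [eraseVar, dir]
  · simp [eraseVar, dir, h]

lemma hasFDerivAt_avg (hf : ContDiff ℝ 1 f) (i : Fin N) (x : Fin N → Fin d → ℝ) :
    HasFDerivAt (avg i f)
      (∫ y in boxd d, (fderiv ℝ f (Function.update x i y)).comp (eraseVar d i)) x := by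
  have hc : Continuous fun p : (Fin N → Fin d → ℝ) × (Fin d → ℝ) =>
      (fderiv ℝ f (Function.update p.1 i p.2)).comp (eraseVar d i) :=
    ((hf.continuous_fderiv one_ne_zero).comp (continuous_update_uncurry i)).clm_comp
      continuous_const
  obtain ⟨C, hC⟩ := ((isCompact_closedBall x 1).prod
    (isCompact_boxd d)).exists_bound_of_continuousOn hc.continuousOn
  refine hasFDerivAt_integral_of_dominated_of_fderiv_le (bound := fun _ => C)
    (F' := fun x y => (fderiv ℝ f (Function.update x i y)).comp (eraseVar d i))
    (Metric.closedBall_mem_nhds x one_pos) ?_ ?_ ?_ ?_ (integrable_const C) ?_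
  · exact Filter.Eventually.of_forall fun z =>
      (hf.continuous.comp (continuous_const.update i continuous_id)).aestronglyMeasurable
  · exact integrable_boxd (hf.continuous.comp (continuous_const.update i continuous_id))
  · exact (integrable_boxd (hc.comp (Continuous.prodMk_right x))).aestronglyMeasurable
  · refine (ae_restrict_iff' (isCompact_boxd d).measurableSet).2
      (Filter.Eventually.of_forall fun y hy z hz => hC (z, y) ⟨hz, hy⟩)
  · refine Filter.Eventually.of_forall fun y z _ => ?_
    have h1 : HasFDerivAt (fun z => Function.update z i y) (eraseVar d i) z := by
      have := (eraseVar d i).hasFDerivAt (x := z) |>.add_const (Pi.single i y)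
      simpa only [eraseVar_add_single] using this
    exact ((hf.differentiable one_ne_zero _).hasFDerivAt).comp z h1

lemma fderiv_Qproj_dir (hf : ContDiff ℝ 1 f) (i j : Fin N) (l : Fin d)
    (x : Fin N → Fin d → ℝ) :
    fderiv ℝ (Qproj d N i f) x (dir d N j l) =
      fderiv ℝ f x (dir d N j l) -
        if i = j then 0 else avg i (fun z => fderiv ℝ f z (dir d N j l)) x := by
  have h := ((hf.differentiable one_ne_zero x).hasFDerivAt.sub (hasFDerivAt_avg hf i x)).fderiv
  have hQ : Qproj d N i f = f - avg i f := rfl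
  rw [hQ, h, sub_apply]
  congr 1
  rw [ContinuousLinearMap.integral_apply]
  · simp only [ContinuousLinearMap.comp_apply, eraseVar_dir]
    split_ifs <;> simp [avg]
  · apply integrable_boxd
    exact ((hf.continuous_fderiv one_ne_zero).comp
      (continuous_const.update i continuous_id)).clm_comp continuous_const

lemma continuous_fderiv_dir (hf : ContDiff ℝ 1 f) (j : Fin N) (l : Fin d) :
    Continuous fun x => fderiv ℝ f x (dir d N j l) :=
  (hf.continuous_fderiv one_ne_zero).clm_apply continuous_const

lemma continuous_fderiv_Qproj_dir (hf : ContDiff ℝ 1 f) (i j : Fin N) (l : Fin d) :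
    Continuous fun x => fderiv ℝ (Qproj d N i f) x (dir d N j l) := by
  simp only [fderiv_Qproj_dir hf]
  refine (continuous_fderiv_dir hf j l).sub ?_
  split_ifs
  · exact continuous_const
  · exact continuous_avg i (continuous_fderiv_dir hf j l)

lemma ip_planeWaveN_Qproj (hf : Continuous f) (k : Fin N → Fin d → ℤ) (i : Fin N) :
    ip (planeWaveN k) (Qproj d N i f) = if k i = 0 then 0 else ip (planeWaveN k) f := by
  rw [Qproj_eq, ip_sub_right (continuous_planeWaveN k) hf (continuous_avg i hf),
    ip_planeWaveN_avg i k hf]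
  split_ifs <;> simp

lemma ip_planeWaveN_fderiv_Qproj (hp : PeriodicWF d N f) (hf : ContDiff ℝ 1 f)
    (k : Fin N → Fin d → ℤ) (i j : Fin N) (l : Fin d) :
    ip (planeWaveN k) (fun x => fderiv ℝ (Qproj d N i f) x (dir d N j l)) =
      if k i = 0 then 0 else 2 * π * Complex.I * k j l * ip (planeWaveN k) f := by
  have hc := continuous_fderiv_dir hf j l
  simp only [fderiv_Qproj_dir hf]
  by_cases hij : i = j
  · subst hij
    simp only [if_true, sub_zero, ip_planeWaveN_fderiv hp hf]
    split_ifs with hk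
    · simp [hk]
    · rfl
  · simp only [if_neg hij]
    rw [ip_sub_right (continuous_planeWaveN k) hc (continuous_avg i hc),
      ip_planeWaveN_avg i k hc, ip_planeWaveN_fderiv hp hf]
    split_ifs <;> simp

lemma periodicWF_fderiv_dir (hp : PeriodicWF d N f) (j : Fin N) (l : Fin d) :
    PeriodicWF d N (fun x => fderiv ℝ f x (dir d N j l)) := by
  intro x k
  have : (fun y : Fin N → Fin d → ℝ => f (y + fun i j => (k i j : ℝ))) = f := by
    ext y; exact hp y k
  change _ = fderiv ℝ f x (dir d N j l)
  conv_rhs => rw [← this, fderiv_comp_add_right]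
  rfl

end Derivative

end UnitTorus

/-! ### Kinetic energy and number of excited particles in Fourier space -/

section Kinetic

variable {d N : ℕ} {f : (Fin N → Fin d → ℝ) → ℂ}

/-- The number of excited particles operator `∑ᵢ Qᵢ` applied to `f`. -/
def excitedOp (f : (Fin N → Fin d → ℝ) → ℂ) : (Fin N → Fin d → ℝ) → ℂ :=
  fun x => ∑ i, Qproj d N i f x

/-- The kinetic energy operator `-∑ᵢ Δᵢ` applied to `f`. -/
def kineticOp (f : (Fin N → Fin d → ℝ) → ℂ) : (Fin N → Fin d → ℝ) → ℂ :=
  fun x => -∑ i, ∑ j, fderiv ℝ (fun y => fderiv ℝ f y (dir d N i j)) x (dir d N i j)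

/-- The symbol of the number of excited particles operator. -/
def excitedSymbol (k : Fin N → Fin d → ℤ) : ℝ := ∑ i, if k i = 0 then 0 else 1

/-- The symbol of the kinetic energy operator. -/
def kineticSymbol (k : Fin N → Fin d → ℤ) : ℝ := ∑ i, pSq d (k i)

lemma excitedSymbol_nonneg (k : Fin N → Fin d → ℤ) : 0 ≤ excitedSymbol k :=
  Finset.sum_nonneg fun i _ => by split_ifs <;> simp

lemma excitedSymbol_le_kineticSymbol (k : Fin N → Fin d → ℤ) :
    (2 * π) ^ 2 * excitedSymbol k ≤ kineticSymbol k := by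
  rw [excitedSymbol, kineticSymbol, Finset.mul_sum]
  refine Finset.sum_le_sum fun i _ => ?_
  split_ifs with h
  · rw [mul_zero, pSq]
    positivity
  · obtain ⟨l, hl⟩ := Function.ne_iff.1 h
    have h1 : (1 : ℝ) ≤ (k i l : ℝ) ^ 2 := by
      have : (1 : ℤ) ≤ (k i l) ^ 2 := by
        have := sq_pos_of_ne_zero (show k i l ≠ 0 from hl)
        omega
      exact_mod_cast this
    calc (2 * π) ^ 2 * 1 ≤ (2 * π) ^ 2 * (k i l : ℝ) ^ 2 := by gcongr
      _ = (2 * π * (k i l : ℝ)) ^ 2 := by ring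
      _ ≤ pSq d (k i) := Finset.single_le_sum
          (f := fun l => (2 * π * (k i l : ℝ)) ^ 2) (fun _ _ => sq_nonneg _) (Finset.mem_univ l)

lemma contDiff_fderiv_dir (hf : ContDiff ℝ 2 f) (j : Fin N) (l : Fin d) :
    ContDiff ℝ 1 fun x => fderiv ℝ f x (dir d N j l) :=
  (hf.fderiv_right (by norm_num)).clm_apply contDiff_const

lemma continuous_excitedOp (hf : Continuous f) : Continuous (excitedOp f) :=
  continuous_finsetSum _ fun i _ => continuous_Qproj i hf

lemma continuous_kineticOp (hf : ContDiff ℝ 2 f) : Continuous (kineticOp f) :=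
  (continuous_finsetSum _ fun i _ => continuous_finsetSum _ fun j _ =>
    continuous_fderiv_dir (contDiff_fderiv_dir hf i j) i j).neg

lemma ip_planeWaveN_excitedOp (hf : Continuous f) (k : Fin N → Fin d → ℤ) :
    ip (planeWaveN k) (excitedOp f) = excitedSymbol k * ip (planeWaveN k) f := by
  unfold excitedOp
  rw [ip_sum_right _ (continuous_planeWaveN k) fun i _ => continuous_Qproj i hf]
  simp only [ip_planeWaveN_Qproj hf, excitedSymbol]
  push_cast
  rw [Finset.sum_mul]
  refine Finset.sum_congr rfl fun i _ => ?_
  split_ifs <;> simp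

lemma ip_planeWaveN_kineticOp (hp : PeriodicWF d N f) (hf : ContDiff ℝ 2 f)
    (k : Fin N → Fin d → ℤ) :
    ip (planeWaveN k) (kineticOp f) = kineticSymbol k * ip (planeWaveN k) f := by
  have h : kineticOp f = fun x => (-1 : ℂ) * ∑ i, ∑ j,
      fderiv ℝ (fun y => fderiv ℝ f y (dir d N i j)) x (dir d N i j) := by
    ext x; simp [kineticOp]
  have hc : ∀ (i : Fin N) (j : Fin d), Continuous fun x =>
      fderiv ℝ (fun y => fderiv ℝ f y (dir d N i j)) x (dir d N i j) := fun i j =>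
    continuous_fderiv_dir (contDiff_fderiv_dir hf i j) i j
  rw [h, ip_const_mul_right, ip_sum_right _ (continuous_planeWaveN k)
    fun i _ => continuous_finsetSum _ fun j _ => hc i j, kineticSymbol]
  push_cast
  rw [Finset.mul_sum, Finset.sum_mul]
  refine Finset.sum_congr rfl fun i _ => ?_
  rw [ip_sum_right _ (continuous_planeWaveN k) fun j _ => hc i j, pSq]
  push_cast
  rw [Finset.mul_sum, Finset.sum_mul]
  refine Finset.sum_congr rfl fun j _ => ?_
  rw [ip_planeWaveN_fderiv (periodicWF_fderiv_dir hp i j) (contDiff_fderiv_dir hf i j),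
    ip_planeWaveN_fderiv hp (hf.of_le one_le_two)]
  linear_combination (-4 * (π : ℂ) ^ 2 * (k i j) ^ 2 * ip (planeWaveN k) f) * Complex.I_sq

lemma hasSum_ip_of_symbols {g h : (Fin N → Fin d → ℝ) → ℂ} {a b : (Fin N → Fin d → ℤ) → ℝ}
    (hg : Continuous g) (hh : Continuous h)
    (ha : ∀ k, ip (planeWaveN k) g = a k * ip (planeWaveN k) f)
    (hb : ∀ k, ip (planeWaveN k) h = b k * ip (planeWaveN k) f) :
    HasSum (fun k => a k * b k * ‖ip (planeWaveN k) f‖ ^ 2) (ip g h).re := by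
  have := Complex.hasSum_re (hasSum_ip hg hh)
  convert this using 1
  ext k
  rw [ha, hb, map_mul, Complex.conj_ofReal, mul_mul_mul_comm, ← Complex.normSq_eq_conj_mul_self,
    ← Complex.ofReal_mul, ← Complex.ofReal_mul, Complex.ofReal_re, Complex.normSq_eq_norm_sq]

lemma excited_le_kinetic (hp : PeriodicWF d N f) (hf : ContDiff ℝ 2 f) :
    (2 * π) ^ 2 * (ip (excitedOp f) f).re ≤ (ip f (kineticOp f)).re := by
  have hc := hf.continuous
  have h1 := (hasSum_ip_of_symbols (f := f) (continuous_excitedOp hc) hc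
    (ip_planeWaveN_excitedOp hc) (b := fun _ => 1) (by simp)).mul_left ((2 * π) ^ 2)
  have h2 := hasSum_ip_of_symbols (f := f) hc (continuous_kineticOp hf) (a := fun _ => 1) (by simp)
    (ip_planeWaveN_kineticOp hp hf)
  refine hasSum_le (fun k => ?_) h1 h2
  have := mul_le_mul_of_nonneg_right (excitedSymbol_le_kineticSymbol k)
    (sq_nonneg ‖ip (planeWaveN k) f‖)
  linarith

lemma excited_sq_le (hp : PeriodicWF d N f) (hf : ContDiff ℝ 2 f) :
    (2 * π) ^ 2 * (ip (excitedOp f) (excitedOp f)).re ≤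
      (ip (excitedOp f) (kineticOp f)).re := by
  have hc := hf.continuous
  have h1 := (hasSum_ip_of_symbols (f := f) (continuous_excitedOp hc) (continuous_excitedOp hc)
    (ip_planeWaveN_excitedOp hc) (ip_planeWaveN_excitedOp hc)).mul_left ((2 * π) ^ 2)
  have h2 := hasSum_ip_of_symbols (f := f) (continuous_excitedOp hc) (continuous_kineticOp hf)
    (ip_planeWaveN_excitedOp hc) (ip_planeWaveN_kineticOp hp hf)
  refine hasSum_le (fun k => ?_) h1 h2
  have := mul_le_mul_of_nonneg_right (excitedSymbol_le_kineticSymbol k)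
    (mul_nonneg (excitedSymbol_nonneg k) (sq_nonneg ‖ip (planeWaveN k) f‖))
  linarith

lemma sum_integral_fderiv_Qproj (hp : PeriodicWF d N f) (hf : ContDiff ℝ 2 f) :
    (∑ i : Fin N, ∑ j : Fin N, ∫ x in boxN d N, ∑ l : Fin d,
        fderiv ℝ (Qproj d N i f) x (dir d N j l) *
          (starRingEnd ℂ) (fderiv ℝ f x (dir d N j l))).re =
      (ip (excitedOp f) (kineticOp f)).re := by
  have hc := hf.continuous
  have hf1 : ContDiff ℝ 1 f := hf.of_le one_le_two
  have h2 := hasSum_ip_of_symbols (f := f) (continuous_excitedOp hc) (continuous_kineticOp hf)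
    (ip_planeWaveN_excitedOp hc) (ip_planeWaveN_kineticOp hp hf)
  have h1 : (∑ i : Fin N, ∑ j : Fin N, ∫ x in boxN d N, ∑ l : Fin d,
        fderiv ℝ (Qproj d N i f) x (dir d N j l) *
          (starRingEnd ℂ) (fderiv ℝ f x (dir d N j l))) =
      ∑ i : Fin N, ∑ j : Fin N, ∑ l : Fin d, ip (fun x => fderiv ℝ f x (dir d N j l))
        (fun x => fderiv ℝ (Qproj d N i f) x (dir d N j l)) := by
    refine Finset.sum_congr rfl fun i _ => Finset.sum_congr rfl fun j _ => ?_
    simp only [mul_comm _ ((starRingEnd ℂ) _)]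
    exact integral_finsetSum _ fun l _ => integrable_boxN
      (continuous_conj_mul (continuous_fderiv_dir hf1 j l) (continuous_fderiv_Qproj_dir hf1 i j l))
  rw [h1]
  have h3 := Complex.hasSum_re (hasSum_sum (s := Finset.univ) fun (i : Fin N) _ =>
    hasSum_sum (s := Finset.univ) fun (j : Fin N) _ => hasSum_sum (s := Finset.univ)
      fun (l : Fin d) _ => hasSum_ip (continuous_fderiv_dir hf1 j l)
        (continuous_fderiv_Qproj_dir hf1 i j l))
  refine h3.unique ?_
  convert h2 using 1
  ext k
  rw [excitedSymbol, kineticSymbol, Finset.sum_mul, Finset.sum_mul, Complex.re_sum]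
  refine Finset.sum_congr rfl fun i _ => ?_
  rw [Finset.mul_sum, Finset.sum_mul, Complex.re_sum]
  refine Finset.sum_congr rfl fun j _ => ?_
  rw [pSq, Finset.mul_sum, Finset.sum_mul, Complex.re_sum]
  refine Finset.sum_congr rfl fun l _ => ?_
  rw [ip_planeWaveN_fderiv hp hf1, ip_planeWaveN_fderiv_Qproj hp hf1]
  split_ifs with hk
  · simp
  · rw [← Complex.normSq_eq_conj_mul_self, Complex.ofReal_re, Complex.normSq_eq_norm_sq]
    simp only [norm_mul, Complex.norm_I, Complex.norm_intCast, Complex.norm_real,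
      Complex.norm_ofNat, Real.norm_eq_abs, mul_pow, sq_abs]
    ring

end Kinetic

/-! ### The interaction potential -/

section Potential

variable {d N : ℕ} {v : (Fin d → ℝ) → ℝ} {vhat : (Fin d → ℤ) → ℝ}

lemma PotentialAssumptions.hasSum (hv : PotentialAssumptions d v vhat) (x : Fin d → ℝ) :
    HasSum (fun k => (vhat k : ℂ) * planeWave k x) (v x) := by
  have hs : Summable fun k => (vhat k : ℂ) * planeWave k x := by
    refine Summable.of_norm ?_
    simpa [norm_planeWave, abs_of_nonneg (hv.nonneg _)] using hv.summable
  have h := hs.hasSum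
  convert h using 1
  rw [hv.expansion x]
  rfl

lemma PotentialAssumptions.hasSum_vhat (hv : PotentialAssumptions d v vhat) :
    HasSum vhat (v 0) := by
  have := hv.hasSum 0
  simp only [planeWave_zero_right, mul_one] at this
  exact_mod_cast this

lemma PotentialAssumptions.abs_le_apply_zero (hv : PotentialAssumptions d v vhat) (x : Fin d → ℝ) :
    |v x| ≤ v 0 := by
  rw [← Real.norm_eq_abs, ← Complex.norm_real, ← (hv.hasSum x).tsum_eq,
    ← hv.hasSum_vhat.tsum_eq]
  refine (norm_tsum_le_tsum_norm ?_).trans_eq ?_ <;>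
    simp [norm_planeWave, abs_of_nonneg (hv.nonneg _), hv.summable]

lemma PotentialAssumptions.integral_eq (hv : PotentialAssumptions d v vhat) :
    ∫ y in boxd d, v y = vhat 0 := by
  have := hv.coeffs 0
  simp only [Pi.zero_apply, Int.cast_zero, mul_zero, zero_mul, Finset.sum_const_zero,
    Complex.ofReal_zero, Complex.exp_zero, mul_one] at this
  rw [integral_complex_ofReal] at this
  exact_mod_cast this.symm

lemma PotentialAssumptions.vhat_zero_le (hv : PotentialAssumptions d v vhat) :
    vhat 0 ≤ v 0 :=
  le_hasSum hv.hasSum_vhat 0 fun k _ => hv.nonneg k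

lemma PotentialAssumptions.integral_sub (hv : PotentialAssumptions d v vhat) (c : Fin d → ℝ) :
    ∫ y in boxd d, v (y - c) = vhat 0 := by
  rw [← hv.integral_eq, ← PeriodicFun.integral_add_const (h := v) hv.periodic (-c)]
  rfl

/-- Positivity of the Fourier coefficients bounds the pair sum from below by its mean field. -/
lemma PotentialAssumptions.le_sum_sum (hv : PotentialAssumptions d v vhat)
    (x : Fin N → Fin d → ℝ) :
    vhat 0 * (N : ℝ) ^ 2 ≤ ∑ a, ∑ b, v (x a - x b) := by
  have h1 := hasSum_sum (s := Finset.univ) fun (a : Fin N) _ =>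
    hasSum_sum (s := Finset.univ) fun (b : Fin N) _ => Complex.hasSum_re (hv.hasSum (x a - x b))
  simp only [Complex.ofReal_re] at h1
  have h2 : ∀ k : Fin d → ℤ, ∑ a, ∑ b, ((vhat k : ℂ) * planeWave k (x a - x b)).re =
      vhat k * ‖∑ a, planeWave k (x a)‖ ^ 2 := by
    intro k
    rw [← Complex.normSq_eq_norm_sq, ← Complex.ofReal_re (vhat k * _), Complex.ofReal_mul,
      Complex.normSq_eq_conj_mul_self, mul_comm ((starRingEnd ℂ) _), map_sum, Finset.sum_mul_sum,
      Finset.mul_sum, Complex.re_sum]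
    refine Finset.sum_congr rfl fun a _ => ?_
    rw [Finset.mul_sum, Complex.re_sum]
    simp only [planeWave_sub]
  simp only [h2] at h1
  have h3 := le_hasSum h1 0 fun k _ => mul_nonneg (hv.nonneg k) (sq_nonneg _)
  simpa [planeWave_zero_left] using h3

/-- The sum over ordered pairs of a symmetric function in terms of the full double sum. -/
lemma sum_sum_lt {F : Fin N → Fin N → ℝ} (hF : ∀ i j, F i j = F j i) :
    ∑ i, ∑ j, (if i < j then F i j else 0) = ((∑ i, ∑ j, F i j) - ∑ i, F i i) / 2 := by
  have h1 : ∑ i, ∑ j, (if j < i then F i j else 0) = ∑ i, ∑ j, (if i < j then F i j else 0) := by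
    rw [Finset.sum_comm]
    simp only [hF]
  have h2 : ∑ i, F i i = ∑ i, ∑ j, (if i = j then F i j else 0) := by simp
  have h3 : ∑ i, ∑ j, F i j = ∑ i, ∑ j, ((if i < j then F i j else 0) +
      (if j < i then F i j else 0) + (if i = j then F i j else 0)) := by
    refine Finset.sum_congr rfl fun i _ => Finset.sum_congr rfl fun j _ => ?_
    rcases lt_trichotomy i j with h | h | h
    · simp [h, h.not_gt, h.ne]
    · simp [h]
    · simp [h, h.not_gt, h.ne']
  rw [h3, h2]
  simp only [Finset.sum_add_distrib, h1]
  ring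

/-- The interaction energy of a configuration. -/
def interaction (N : ℕ) (v : (Fin d → ℝ) → ℝ) (x : Fin N → Fin d → ℝ) : ℝ :=
  ((N : ℝ) - 1)⁻¹ * ∑ i, ∑ j, if i < j then v (x i - x j) else 0

lemma PotentialAssumptions.sub_comm (hv : PotentialAssumptions d v vhat) (x y : Fin d → ℝ) :
    v (x - y) = v (y - x) := by
  rw [← hv.even, neg_sub]

lemma PotentialAssumptions.continuous_interaction (hv : PotentialAssumptions d v vhat) :
    Continuous (interaction N v) := by
  have := hv.continuous
  refine continuous_const.mul
    (continuous_finsetSum _ fun i _ => continuous_finsetSum _ fun j _ => ?_)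
  split_ifs <;> fun_prop

lemma PotentialAssumptions.le_interaction (hv : PotentialAssumptions d v vhat) (hN : 2 ≤ N)
    (x : Fin N → Fin d → ℝ) :
    (N : ℝ) / (2 * ((N : ℝ) - 1)) * (N * vhat 0 - v 0) ≤ interaction N v x := by
  have h := hv.le_sum_sum x
  have hN1 : (0 : ℝ) < (N : ℝ) - 1 := by
    have : (2 : ℝ) ≤ N := by exact_mod_cast hN
    linarith
  rw [interaction, sum_sum_lt fun i j => hv.sub_comm (x i) (x j)]
  simp only [sub_self, Finset.sum_const, Finset.card_univ, Fintype.card_fin, nsmul_eq_mul]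
  have : (N : ℝ) / (2 * ((N : ℝ) - 1)) * (N * vhat 0 - v 0) =
      ((N : ℝ) - 1)⁻¹ * ((vhat 0 * (N : ℝ) ^ 2 - N * v 0) / 2) := by
    field_simp
  rw [this]
  gcongr

/-- The interaction between the `i`-th and the `j`-th particle. -/
def pairPot (v : (Fin d → ℝ) → ℝ) (i j : Fin N) (x : Fin N → Fin d → ℝ) : ℝ := v (x i - x j)

lemma PotentialAssumptions.continuous_pairPot (hv : PotentialAssumptions d v vhat)
    (i j : Fin N) : Continuous (pairPot v i j) := by
  have := hv.continuous
  unfold pairPot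
  fun_prop

lemma PotentialAssumptions.pairPot_comm (hv : PotentialAssumptions d v vhat) (i j : Fin N) :
    pairPot v i j = pairPot v j i :=
  funext fun x => hv.sub_comm (x i) (x j)

lemma PotentialAssumptions.avg_pairPot (hv : PotentialAssumptions d v vhat) {i j : Fin N}
    (hij : i ≠ j) : avg i (fun x => (pairPot v i j x : ℂ)) = fun _ => (vhat 0 : ℂ) := by
  ext x
  simp only [avg, pairPot, Function.update_self, Function.update_of_ne hij.symm]
  rw [integral_complex_ofReal, hv.integral_sub]

lemma hamOp_eq (Ψ : (Fin N → Fin d → ℝ) → ℂ) (x : Fin N → Fin d → ℝ) :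
    HamOp d N v Ψ x = kineticOp Ψ x + (interaction N v x : ℂ) * Ψ x := by
  rw [HamOp, kineticOp, interaction]
  push_cast
  congr 1
  rw [mul_assoc, Finset.sum_mul]
  congr 1
  refine Finset.sum_congr rfl fun i _ => ?_
  rw [Finset.sum_mul]
  refine Finset.sum_congr rfl fun j _ => ?_
  split_ifs <;> simp

lemma PotentialAssumptions.potentialEnergy_eq (hv : PotentialAssumptions d v vhat)
    {Ψ : (Fin N → Fin d → ℝ) → ℂ} (hΨ : Continuous Ψ) :
    potentialEnergy d N v Ψ = ∫ x in boxN d N, interaction N v x * ‖Ψ x‖ ^ 2 := by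
  have hc := hv.continuous
  have hi : ∀ i j : Fin N, Continuous fun x : Fin N → Fin d → ℝ =>
      if i < j then v (x i - x j) * ‖Ψ x‖ ^ 2 else 0 := by
    intro i j
    split_ifs <;> fun_prop
  have : ∀ x, interaction N v x * ‖Ψ x‖ ^ 2 = ((N : ℝ) - 1)⁻¹ * ∑ i, ∑ j,
      if i < j then v (x i - x j) * ‖Ψ x‖ ^ 2 else 0 := by
    intro x
    rw [interaction, mul_assoc, Finset.sum_mul]
    simp only [Finset.sum_mul, ite_mul, zero_mul]
  simp only [this]
  rw [potentialEnergy, integral_const_mul, integral_finsetSum _ fun i _ =>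
    integrable_boxN (continuous_finsetSum _ fun j _ => hi i j)]
  congr 1
  refine Finset.sum_congr rfl fun i _ => ?_
  rw [integral_finsetSum _ fun j _ => integrable_boxN (hi i j)]
  refine Finset.sum_congr rfl fun j _ => ?_
  split_ifs <;> simp

/-- The constant trial function bounds the ground state energy from above. -/
lemma PotentialAssumptions.E0_le (hv : PotentialAssumptions d v vhat) (hN : 2 ≤ N) :
    E0 d N v ≤ N * vhat 0 / 2 := by
  have hN1 : (0 : ℝ) < (N : ℝ) - 1 := by
    have : (2 : ℝ) ≤ N := by exact_mod_cast hN
    linarith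
  refine csInf_le ⟨(N : ℝ) / (2 * ((N : ℝ) - 1)) * (N * vhat 0 - v 0), ?_⟩
    ⟨fun _ => 1, contDiff_const, fun _ _ => rfl, fun _ _ => rfl, by simp [Normalized], ?_⟩
  · rintro _ ⟨Φ, hΦ, -, -, hn, rfl⟩
    have hΦc := hΦ.continuous
    have h1 : 0 ≤ kineticEnergy d N Φ := Finset.sum_nonneg fun i _ =>
      integral_nonneg fun x => Finset.sum_nonneg fun j _ => by positivity
    have h2 : (N : ℝ) / (2 * ((N : ℝ) - 1)) * (N * vhat 0 - v 0) ≤ potentialEnergy d N v Φ := by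
      rw [hv.potentialEnergy_eq hΦc]
      have h3 := integral_const_mul (μ := volume.restrict (boxN d N))
        ((N : ℝ) / (2 * ((N : ℝ) - 1)) * (N * vhat 0 - v 0)) fun x => ‖Φ x‖ ^ 2
      rw [show ∫ x in boxN d N, ‖Φ x‖ ^ 2 = 1 from hn, mul_one] at h3
      rw [← h3]
      have := hv.continuous_interaction (N := N)
      refine integral_mono (integrable_boxN (by fun_prop)) (integrable_boxN (by fun_prop))
        fun x => ?_
      exact mul_le_mul_of_nonneg_right (hv.le_interaction hN x) (sq_nonneg _)
    rw [energyForm]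
    linarith
  · have h1 : kineticEnergy d N (fun _ => (1 : ℂ)) = 0 := by simp [kineticEnergy]
    have h2 : ∀ i j : Fin N, i ≠ j →
        ∫ x in boxN d N, v (x i - x j) * ‖(1 : ℂ)‖ ^ 2 = vhat 0 := by
      intro i j hij
      have h := integral_avg i (f := fun x => (pairPot v i j x : ℂ))
        (Complex.continuous_ofReal.comp (hv.continuous_pairPot i j))
      rw [hv.avg_pairPot hij] at h
      replace h := h.trans integral_complex_ofReal
      simp only [integral_const, probReal_univ, one_smul] at h
      simpa [pairPot] using (Complex.ofReal_inj.1 h).symm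
    have h3 : ∑ i : Fin N, ∑ j : Fin N, (if i < j then
        ∫ x in boxN d N, v (x i - x j) * ‖(1 : ℂ)‖ ^ 2 else 0) =
        ∑ i : Fin N, ∑ j : Fin N, if i < j then vhat 0 else 0 := by
      refine Finset.sum_congr rfl fun i _ => Finset.sum_congr rfl fun j _ => ?_
      split_ifs with h
      · exact h2 i j h.ne
      · rfl
    rw [energyForm, h1, potentialEnergy, h3, sum_sum_lt fun _ _ => rfl]
    simp only [Finset.sum_const, Finset.card_univ, Fintype.card_fin, nsmul_eq_mul]
    field_simp
    ring

end Potential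

/-! ### Projections and symmetric wave functions -/

section Projections

variable {d N : ℕ} {f g : (Fin N → Fin d → ℝ) → ℂ}

lemma Qproj_comm (i j : Fin N) (hf : Continuous f) :
    Qproj d N i (Qproj d N j f) = Qproj d N j (Qproj d N i f) := by
  rw [Qproj_eq i, avg_Qproj_comm i j hf]
  conv_rhs => rw [Qproj_eq j, Qproj_eq i, avg_sub j hf (continuous_avg i hf)]
  ext x
  simp only [Qproj_eq]
  ring

lemma Qproj_Qproj (i : Fin N) (hf : Continuous f) :
    Qproj d N i (Qproj d N i f) = Qproj d N i f := by
  rw [Qproj_eq i, avg_Qproj i hf]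
  simp

lemma ip_Qproj_self (i : Fin N) (hf : Continuous f) :
    ip (Qproj d N i f) (Qproj d N i f) = ip (Qproj d N i f) f := by
  rw [← ip_Qproj_left i (continuous_Qproj i hf) hf, Qproj_Qproj i hf]

lemma ip_self_eq_add (i : Fin N) (hf : Continuous f) :
    ip f f = ip (Qproj d N i f) (Qproj d N i f) + ip (avg i f) (avg i f) := by
  rw [ip_Qproj_self i hf, ← ip_avg_left i (continuous_avg i hf) hf, avg_avg, Qproj_eq,
    ip_sub_left hf (continuous_avg i hf) hf]
  ring

lemma ip_avg_self_le (i : Fin N) (hf : Continuous f) :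
    (ip (avg i f) (avg i f)).re ≤ (ip f f).re := by
  rw [ip_self_eq_add i hf, Complex.add_re]
  linarith [ip_self_re_nonneg (f := Qproj d N i f)]

lemma ip_Qproj_Qproj (i j : Fin N) (hf : Continuous f) :
    ip (Qproj d N i f) (Qproj d N j f) =
      ip (Qproj d N j (Qproj d N i f)) (Qproj d N j (Qproj d N i f)) := by
  have hi := continuous_Qproj i hf
  rw [ip_Qproj_self j hi, Qproj_comm j i hf, ← ip_Qproj_left i
    (continuous_Qproj i (continuous_Qproj j hf)) hf, Qproj_Qproj i (continuous_Qproj j hf),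
    Qproj_comm i j hf, ip_Qproj_left j hi hf]

end Projections

section Exchange

variable {d N : ℕ} {v : (Fin d → ℝ) → ℝ} {vhat : (Fin d → ℤ) → ℝ}
  {B Ψ : (Fin N → Fin d → ℝ) → ℂ} {i j : Fin N}

lemma integral_mul_conj_swap_nonneg {U : (Fin N → Fin d → ℝ) → ℂ} (hU : Continuous U)
    (hij : i ≠ j) (hUj : ∀ x y, U (Function.update x j y) = U x) :
    0 ≤ (∫ x in boxN d N,
      U x * (starRingEnd ℂ) (U fun a => x (Equiv.swap i j a))).re := by
  set W : (Fin N → Fin d → ℝ) → ℂ :=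
    fun x => (starRingEnd ℂ) (U fun a => x (Equiv.swap i j a)) with hW
  have hWc : Continuous W := by fun_prop
  have hA := continuous_avg i hU
  have hWi : avg i W = W := by
    refine avg_of_indep i fun x y => ?_
    simp only [hW]
    rw [← hUj (fun a => x (Equiv.swap i j a)) y]
    congr 2
    ext a : 1
    have : Equiv.swap i j a = i ↔ a = j := by
      rw [Equiv.swap_apply_eq_iff, Equiv.swap_apply_left]
    simp only [Function.update_apply, this]
  have hAj : avg j (avg i U) = avg i U := by
    rw [avg_comm j i hU, avg_of_indep j hUj]
  have hswap : ∀ x : Fin N → Fin d → ℝ, avg i U (fun a => x (Equiv.swap i j a)) = avg i U x := by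
    intro x
    have : (fun a => x (Equiv.swap i j a)) =
        Function.update (Function.update x i (x j)) j (x i) := by
      ext a : 1
      rcases eq_or_ne a j with rfl | haj
      · simp
      · rcases eq_or_ne a i with rfl | hai
        · simp [haj]
        · simp [haj, hai, Equiv.swap_apply_of_ne_of_ne]
    rw [this]
    conv_lhs => rw [← hAj]
    rw [avg_update, hAj, avg_update]
  have hWj : avg j W = fun x => (starRingEnd ℂ) (avg i U x) := by
    rw [hW, avg_conj, avg_comp_swap]
    simp only [hswap]
  have : ∫ x in boxN d N, U x * W x = ip (avg i U) (avg i U) := by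
    conv_lhs => rw [← hWi]
    rw [← integral_avg_mul i hU hWc]
    conv_lhs => rw [← hAj]
    rw [integral_avg_mul j hA hWc, hWj, ip]
    simp only [mul_comm]
  rw [this]
  exact ip_self_re_nonneg

/-- Positivity of the exchange term for potentials of positive type. -/
lemma PotentialAssumptions.exchange_nonneg (hv : PotentialAssumptions d v vhat)
    (hB : Continuous B) (hij : i ≠ j) (hBj : ∀ x y, B (Function.update x j y) = B x) :
    0 ≤ (ip B fun x => (pairPot v i j x : ℂ) * B fun a => x (Equiv.swap i j a)).re := by
  set F : (Fin d → ℤ) → (Fin N → Fin d → ℝ) → ℂ := fun k x =>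
    (starRingEnd ℂ) (B x) * ((vhat k * planeWave k (x i - x j)) *
      B fun a => x (Equiv.swap i j a)) with hF
  have hFc : ∀ k, Continuous (F k) := by
    intro k
    have := continuous_planeWave k
    fun_prop
  have hsum : Summable fun k => ∫ x in boxN d N, ‖F k x‖ := by
    have : ∀ k, ∫ x in boxN d N, ‖F k x‖ =
        vhat k * ∫ x in boxN d N, ‖B x‖ * ‖B fun a => x (Equiv.swap i j a)‖ := by
      intro k
      rw [← integral_const_mul]
      congr 1
      ext x
      simp [hF, norm_planeWave, abs_of_nonneg (hv.nonneg k)]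
      ring
    simp only [this]
    exact hv.summable.mul_right _
  have h := hasSum_integral_of_summable_integral_norm
    (fun k => integrable_boxN (hFc k)) hsum
  have h1 : ∀ x, ∑' k, F k x = (starRingEnd ℂ) (B x) * ((pairPot v i j x : ℂ) *
      B fun a => x (Equiv.swap i j a)) := fun x =>
    (((hv.hasSum (x i - x j)).mul_right _).mul_left _).tsum_eq
  simp only [h1] at h
  refine hasSum_le (fun k => ?_) hasSum_zero (Complex.hasSum_re h)
  set U : (Fin N → Fin d → ℝ) → ℂ := fun x => (starRingEnd ℂ) (B x) * planeWave k (x i) with hU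
  have hUc : Continuous U := by
    have := continuous_planeWave k
    fun_prop
  have h2 : ∀ x, F k x = vhat k * (U x * (starRingEnd ℂ) (U fun a => x (Equiv.swap i j a))) := by
    intro x
    simp only [hF, hU, planeWave_sub, map_mul, Complex.conj_conj, Equiv.swap_apply_left]
    ring
  simp only [h2]
  rw [integral_const_mul, Complex.re_ofReal_mul]
  refine mul_nonneg (hv.nonneg k) (integral_mul_conj_swap_nonneg hUc hij fun x y => ?_)
  simp only [hU, hBj, Function.update_of_ne hij]

lemma SymmetricWF.avg_Qproj_swap (hs : SymmetricWF d N Ψ) (x : Fin N → Fin d → ℝ) :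
    avg j (Qproj d N i Ψ) (fun a => x (Equiv.swap i j a)) = avg i (Qproj d N j Ψ) x := by
  have h0 : (fun x : Fin N → Fin d → ℝ => Ψ fun a => x (Equiv.swap i j a)) = Ψ :=
    funext fun x => hs (Equiv.swap i j) x
  have h1 : ∀ x : Fin N → Fin d → ℝ, Qproj d N i Ψ (fun a => x (Equiv.swap i j a)) =
      Qproj d N j Ψ x := by
    intro x
    have := congrFun (avg_comp_swap (f := Ψ) i j) x
    rw [h0] at this
    simp only [Qproj_eq, this]
    rw [congrFun h0 x]
  have h2 := congrFun (avg_comp_swap (f := Qproj d N i Ψ) j i) x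
  rw [Equiv.swap_comm j i] at h2
  simp only [h1] at h2
  exact h2.symm

/-- Lower bound on the coupling of the excited and the condensed part of the `i`-th particle
through its interaction with the `j`-th particle. -/
lemma PotentialAssumptions.neg_le_ip_pairPot (hv : PotentialAssumptions d v vhat)
    (hΨ : Continuous Ψ) (hs : SymmetricWF d N Ψ) (hn : (ip Ψ Ψ).re = 1) (hij : i ≠ j) :
    -(v 0 * √(ip (Qproj d N i Ψ) (Qproj d N j Ψ)).re +
      v 0 * ((ip (Qproj d N j Ψ) Ψ).re / 2)) ≤
    (ip (Qproj d N i Ψ) fun x => (pairPot v i j x : ℂ) * avg i Ψ x).re := by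
  have hw : Continuous fun x => (pairPot v i j x : ℂ) :=
    Complex.continuous_ofReal.comp (hv.continuous_pairPot i j)
  have hv0 : 0 ≤ v 0 := (abs_nonneg _).trans (hv.abs_le_apply_zero 0)
  have hQi := continuous_Qproj i hΨ
  have hQj := continuous_Qproj j hΨ
  have hPi := continuous_avg i hΨ
  have hD := continuous_Qproj j hQi
  have hB := continuous_avg j hQi
  have hC := continuous_avg i hQj
  have hG := continuous_avg j hPi
  have hwG : Continuous fun x => (pairPot v i j x : ℂ) * avg j (avg i Ψ) x := hw.mul hG
  have hwC : Continuous fun x => (pairPot v i j x : ℂ) * avg i (Qproj d N j Ψ) x := hw.mul hC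
  set D := Qproj d N j (Qproj d N i Ψ) with hDdef
  have hsplit : ip (Qproj d N i Ψ) (fun x => (pairPot v i j x : ℂ) * avg i Ψ x) =
      ip D (fun x => (pairPot v i j x : ℂ) * avg j (avg i Ψ) x) +
      ip D (fun x => (pairPot v i j x : ℂ) * avg i (Qproj d N j Ψ) x) +
      ip (avg j (Qproj d N i Ψ)) (fun x => (pairPot v i j x : ℂ) * avg j (avg i Ψ) x) +
      ip (avg j (Qproj d N i Ψ)) (fun x => (pairPot v i j x : ℂ) * avg i (Qproj d N j Ψ) x) := by
    have h1 : (fun x => (pairPot v i j x : ℂ) * avg i Ψ x) = fun x =>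
        (pairPot v i j x : ℂ) * avg j (avg i Ψ) x +
          (pairPot v i j x : ℂ) * avg i (Qproj d N j Ψ) x := by
      ext x
      rw [avg_Qproj_comm i j hΨ, Qproj_eq]
      ring
    rw [h1, hDdef, Qproj_eq (f := Qproj d N i Ψ) j, ip_sub_left hQi hB hwG, ip_sub_left hQi hB hwC,
      ip_add_right hQi hwG hwC]
    ring
  have hzero : ip (avg j (Qproj d N i Ψ))
      (fun x => (pairPot v i j x : ℂ) * avg j (avg i Ψ) x) = 0 := by
    have h1 : avg j (fun x => (pairPot v i j x : ℂ) * avg j (avg i Ψ) x) =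
        fun x => (vhat 0 : ℂ) * avg j (avg i Ψ) x := by
      have := avg_mul_of_indep (f := fun x => (pairPot v i j x : ℂ)) j
        (avg_update (f := avg i Ψ) j)
      rw [hv.pairPot_comm i j] at this ⊢
      simp only [mul_comm _ (avg j (avg i Ψ) _), this, hv.avg_pairPot hij.symm]
    rw [← avg_avg j, ip_avg_left j hB hwG, h1, ip_const_mul_right, avg_comm j i hΨ,
      avg_Qproj_comm j i hΨ, ip_Qproj_avg i (continuous_avg j hΨ) (continuous_avg j hΨ), mul_zero]
  have hexch : 0 ≤ (ip (avg j (Qproj d N i Ψ))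
      (fun x => (pairPot v i j x : ℂ) * avg i (Qproj d N j Ψ) x)).re := by
    have := hv.exchange_nonneg hB hij (avg_update j)
    simpa only [hs.avg_Qproj_swap] using this
  have hb : (ip D D).re = (ip (Qproj d N i Ψ) (Qproj d N j Ψ)).re := by
    rw [ip_Qproj_Qproj i j hΨ]
  have hC2 : (ip (avg i (Qproj d N j Ψ)) (avg i (Qproj d N j Ψ))).re =
      (ip (Qproj d N j Ψ) Ψ).re - (ip D D).re := by
    have := ip_self_eq_add i hQj
    rw [Qproj_comm i j hΨ, ← hDdef, ip_Qproj_self j hΨ] at this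
    rw [this, Complex.add_re]
    ring
  have hG2 : (ip (avg j (avg i Ψ)) (avg j (avg i Ψ))).re ≤ 1 :=
    (ip_avg_self_le j hPi).trans ((ip_avg_self_le i hΨ).trans_eq hn)
  have h1 : -(v 0 * √(ip D D).re) ≤
      (ip D (fun x => (pairPot v i j x : ℂ) * avg j (avg i Ψ) x)).re := by
    have h := (Complex.abs_re_le_norm _).trans (norm_ip_weight_le
      (fun x => hv.abs_le_apply_zero (x i - x j)) (hv.continuous_pairPot i j) hD hG)
    have h' : √(ip D D).re * √(ip (avg j (avg i Ψ)) (avg j (avg i Ψ))).re ≤ √(ip D D).re :=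
      mul_le_of_le_one_right (Real.sqrt_nonneg _) (Real.sqrt_le_one.2 hG2)
    have := (abs_le.1 h).1
    have := mul_le_mul_of_nonneg_left h' hv0
    simp only [pairPot] at *
    linarith
  have h2 : -(v 0 * ((ip (Qproj d N j Ψ) Ψ).re / 2)) ≤
      (ip D (fun x => (pairPot v i j x : ℂ) * avg i (Qproj d N j Ψ) x)).re := by
    have h := (Complex.abs_re_le_norm _).trans (norm_ip_weight_le
      (fun x => hv.abs_le_apply_zero (x i - x j)) (hv.continuous_pairPot i j) hD hC)
    have h' : √(ip D D).re * √(ip (avg i (Qproj d N j Ψ)) (avg i (Qproj d N j Ψ))).re ≤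
        (ip (Qproj d N j Ψ) Ψ).re / 2 := by
      have e1 := Real.sq_sqrt (ip_self_re_nonneg (f := D))
      have e2 := Real.sq_sqrt (ip_self_re_nonneg (f := avg i (Qproj d N j Ψ)))
      have := two_mul_le_add_sq √(ip D D).re
        √(ip (avg i (Qproj d N j Ψ)) (avg i (Qproj d N j Ψ))).re
      linarith
    have := (abs_le.1 h).1
    have := mul_le_mul_of_nonneg_left h' hv0
    simp only [pairPot] at *
    linarith
  rw [hsplit, hzero, add_zero, Complex.add_re, Complex.add_re, ← hb]
  linarith

end Exchange

/-! ### The second moment of the number of excited particles -/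

section Main

variable {d N : ℕ} {v : (Fin d → ℝ) → ℝ} {vhat : (Fin d → ℤ) → ℝ}
  {Ψ : (Fin N → Fin d → ℝ) → ℂ}

/-- A double sum supported on the row and the column through a vanishing diagonal entry. -/
lemma sum_sum_of_cross {T : Fin N → Fin N → ℝ} (i : Fin N) (hT : ∀ a b, T a b = T b a)
    (hii : T i i = 0) (h0 : ∀ a b, a ≠ i → b ≠ i → T a b = 0) :
    ∑ a, ∑ b, T a b = 2 * ∑ b, T i b := by
  have h1 : ∀ a b, T a b = (if a = i then T i b else 0) + (if b = i then T i a else 0) := by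
    intro a b
    by_cases ha : a = i <;> by_cases hb : b = i
    · simp [ha, hb, hii]
    · simp [ha, hb]
    · simp [ha, hb, hT a i]
    · simp [ha, hb, h0 a b ha hb]
  calc ∑ a, ∑ b, T a b
      = ∑ a, ∑ b, ((if a = i then T i b else 0) + (if b = i then T i a else 0)) :=
        Finset.sum_congr rfl fun a _ => Finset.sum_congr rfl fun b _ => h1 a b
    _ = 2 * ∑ b, T i b := by
        simp only [Finset.sum_add_distrib]
        rw [Finset.sum_comm]
        simp only [Finset.sum_ite_eq', Finset.mem_univ, if_true]
        ring

/-- Only pairs containing the `i`-th particle couple its excited and its condensed part. -/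
lemma PotentialAssumptions.ip_interaction_avg (hv : PotentialAssumptions d v vhat)
    (hΨ : Continuous Ψ) (i : Fin N) :
    (ip (Qproj d N i Ψ) fun x => (interaction N v x : ℂ) * avg i Ψ x).re =
      ((N : ℝ) - 1)⁻¹ * ∑ j, if i = j then 0 else
        (ip (Qproj d N i Ψ) fun x => (pairPot v i j x : ℂ) * avg i Ψ x).re := by
  have hw : ∀ a b : Fin N, Continuous fun x => (pairPot v a b x : ℂ) := fun a b =>
    Complex.continuous_ofReal.comp (hv.continuous_pairPot a b)
  have hQ := continuous_Qproj i hΨ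
  have hP := continuous_avg i hΨ
  set T : Fin N → Fin N → ℝ := fun a b =>
    (ip (Qproj d N i Ψ) fun x => (pairPot v a b x : ℂ) * avg i Ψ x).re with hT
  have hTc : ∀ a b, Continuous fun x => (pairPot v a b x : ℂ) * avg i Ψ x := fun a b =>
    (hw a b).mul hP
  have hTs : ∀ a b, T a b = T b a := fun a b => by simp only [hT, hv.pairPot_comm a b]
  have hT0 : ∀ a b, a ≠ i → b ≠ i → T a b = 0 := by
    intro a b ha hb
    have hind : ∀ x y, (pairPot v a b (Function.update x i y) : ℂ) = pairPot v a b x := by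
      intro x y
      simp only [pairPot, Function.update_of_ne ha, Function.update_of_ne hb]
    have hc : Continuous fun x => (pairPot v a b x : ℂ) * Ψ x := (hw a b).mul hΨ
    have h1 := avg_mul_of_indep (g := fun x => (pairPot v a b x : ℂ)) (f := Ψ) i hind
    simp only [hT, ← h1]
    rw [ip_Qproj_avg i hΨ hc, Complex.zero_re]
  have hTd : ∀ a, T a a = 0 := by
    intro a
    simp only [hT, pairPot, sub_self]
    rw [ip_const_mul_right, ip_Qproj_avg i hΨ hΨ, mul_zero, Complex.zero_re]
  have hexp : (fun x => (interaction N v x : ℂ) * avg i Ψ x) = fun x =>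
      ((((N : ℝ) - 1)⁻¹ : ℝ) : ℂ) * ∑ a, ∑ b,
        (if a < b then (pairPot v a b x : ℂ) * avg i Ψ x else 0) := by
    ext x
    rw [interaction, Complex.ofReal_mul, mul_assoc, Complex.ofReal_sum, Finset.sum_mul]
    congr 1
    refine Finset.sum_congr rfl fun a _ => ?_
    rw [Complex.ofReal_sum, Finset.sum_mul]
    refine Finset.sum_congr rfl fun b _ => ?_
    split_ifs <;> simp [pairPot]
  have hite : ∀ a b : Fin N, Continuous fun x =>
      if a < b then (pairPot v a b x : ℂ) * avg i Ψ x else 0 := by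
    intro a b
    split_ifs
    · exact hTc a b
    · exact continuous_const
  rw [hexp, ip_const_mul_right, Complex.re_ofReal_mul,
    ip_sum_right _ hQ fun a _ => continuous_finsetSum _ fun b _ => hite a b, Complex.re_sum]
  have h2 : ∀ a, (ip (Qproj d N i Ψ) fun x => ∑ b,
      (if a < b then (pairPot v a b x : ℂ) * avg i Ψ x else 0)).re =
      ∑ b, if a < b then T a b else 0 := by
    intro a
    rw [ip_sum_right _ hQ fun b _ => hite a b, Complex.re_sum]
    refine Finset.sum_congr rfl fun b _ => ?_
    split_ifs
    · rfl
    · simp [ip]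
  simp only [h2]
  rw [sum_sum_lt hTs, sum_sum_of_cross i hTs (hTd i) hT0]
  simp only [hTd, Finset.sum_const_zero, sub_zero]
  rw [mul_div_cancel_left₀ _ two_ne_zero]
  congr 1
  refine Finset.sum_congr rfl fun b _ => ?_
  split_ifs with h
  · rw [← h, hTd]
  · rfl

/-- Cauchy–Schwarz for the off-diagonal entries of a matrix with dominated entries. -/
lemma sum_sqrt_offDiag_le (hN : 2 ≤ N) {b : Fin N → Fin N → ℝ} {a : Fin N → ℝ}
    (hb : ∀ i j, i ≠ j → 0 ≤ b i j) (hba : ∀ i j, i ≠ j → b i j ≤ a j)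
    (hd : ∀ i, b i i = a i) (hS : 0 ≤ ∑ i, ∑ j, b i j) :
    ((N : ℝ) - 1)⁻¹ * ∑ i, ∑ j, (if i = j then 0 else √(b i j)) ≤ √(∑ i, ∑ j, b i j) := by
  have hN1 : (0 : ℝ) < (N : ℝ) - 1 := by
    have : (2 : ℝ) ≤ N := by exact_mod_cast hN
    linarith
  have hcount : ∀ j : Fin N, ∑ i : Fin N, (if i = j then (0 : ℝ) else 1) = (N : ℝ) - 1 := by
    intro j
    have : ∀ i : Fin N, (if i = j then (0 : ℝ) else 1) = 1 - if i = j then 1 else 0 := by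
      intro i; split_ifs <;> simp
    simp [this]
  set β : ℝ := ∑ i, ∑ j, (if i = j then 0 else b i j) with hβ
  have h1 : ∑ i, ∑ j, b i j = β + ∑ j, a j := by
    have : ∀ i j, b i j = (if i = j then 0 else b i j) + (if i = j then a j else 0) := by
      intro i j
      split_ifs with h
      · rw [h, hd, zero_add]
      · rw [add_zero]
    calc ∑ i, ∑ j, b i j
        = ∑ i, ∑ j, ((if i = j then 0 else b i j) + (if i = j then a j else 0)) :=
          Finset.sum_congr rfl fun i _ => Finset.sum_congr rfl fun j _ => this i j
      _ = _ := by simp [Finset.sum_add_distrib, hβ]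
  have h2 : β ≤ ((N : ℝ) - 1) * ∑ j, a j := by
    rw [hβ, Finset.sum_comm, Finset.mul_sum]
    refine Finset.sum_le_sum fun j _ => ?_
    rw [← hcount j, Finset.sum_mul]
    refine Finset.sum_le_sum fun i _ => ?_
    split_ifs with h
    · simp
    · simpa using hba i j h
  have h3 : (∑ i, ∑ j, (if i = j then 0 else √(b i j))) ^ 2 ≤ β * (N * ((N : ℝ) - 1)) := by
    have := Finset.sum_mul_sq_le_sq_mul_sq (Finset.univ : Finset (Fin N × Fin N))
      (fun p => if p.1 = p.2 then 0 else √(b p.1 p.2)) (fun p => if p.1 = p.2 then 0 else 1)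
    simp only [Fintype.sum_prod_type] at this
    have e1 : ∀ i j : Fin N, (if i = j then 0 else √(b i j)) * (if i = j then 0 else 1) =
        if i = j then 0 else √(b i j) := by
      intro i j; split_ifs <;> simp
    have e2 : ∀ i j : Fin N, (if i = j then 0 else √(b i j)) ^ 2 =
        if i = j then 0 else b i j := by
      intro i j
      split_ifs with h
      · simp
      · exact Real.sq_sqrt (hb i j h)
    have e3 : ∑ i : Fin N, ∑ j : Fin N, (if i = j then (0 : ℝ) else 1) ^ 2 =
        N * ((N : ℝ) - 1) := by
      rw [Finset.sum_comm]
      simp only [ite_pow, one_pow, ne_eq, OfNat.ofNat_ne_zero, not_false_eq_true, zero_pow, hcount]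
      simp
      ring
    simpa only [e1, e2, e3] using this
  rw [inv_mul_le_iff₀ hN1]
  refine le_of_sq_le_sq ?_ (by positivity)
  rw [mul_pow, Real.sq_sqrt hS, h1]
  refine h3.trans ?_
  nlinarith [mul_le_mul_of_nonneg_left h2 hN1.le]

/-- Lower bound on the coupling of the excited and the condensed parts through the interaction. -/
lemma PotentialAssumptions.neg_le_sum_ip_interaction_avg (hv : PotentialAssumptions d v vhat)
    (hN : 2 ≤ N) (hΨ : Continuous Ψ) (hs : SymmetricWF d N Ψ) (hn : (ip Ψ Ψ).re = 1) :
    -(v 0 * √(ip (excitedOp Ψ) (excitedOp Ψ)).re + v 0 / 2 * (ip (excitedOp Ψ) Ψ).re) ≤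
    ∑ i, (ip (Qproj d N i Ψ) fun x => (interaction N v x : ℂ) * avg i Ψ x).re := by
  have hv0 : 0 ≤ v 0 := (abs_nonneg _).trans (hv.abs_le_apply_zero 0)
  have hN1 : (0 : ℝ) < (N : ℝ) - 1 := by
    have : (2 : ℝ) ≤ N := by exact_mod_cast hN
    linarith
  have hQ := fun i : Fin N => continuous_Qproj i hΨ
  set a : Fin N → ℝ := fun j => (ip (Qproj d N j Ψ) Ψ).re with ha
  set b : Fin N → Fin N → ℝ := fun i j => (ip (Qproj d N i Ψ) (Qproj d N j Ψ)).re with hb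
  have hS : (ip (excitedOp Ψ) (excitedOp Ψ)).re = ∑ i, ∑ j, b i j := by
    unfold excitedOp
    rw [ip_sum_left _ (continuous_finsetSum _ fun i _ => hQ i) fun i _ => hQ i, Complex.re_sum]
    refine Finset.sum_congr rfl fun i _ => ?_
    rw [ip_sum_right _ (hQ i) fun j _ => hQ j, Complex.re_sum]
  have hn' : (ip (excitedOp Ψ) Ψ).re = ∑ j, a j := by
    unfold excitedOp
    rw [ip_sum_left _ hΨ fun i _ => hQ i, Complex.re_sum]
  have hb0 : ∀ i j, 0 ≤ b i j := fun i j => by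
    simp only [hb]
    rw [ip_Qproj_Qproj i j hΨ]
    exact ip_self_re_nonneg
  have hba : ∀ i j, b i j ≤ a j := fun i j => by
    simp only [hb, ha]
    rw [ip_Qproj_Qproj i j hΨ, ← ip_Qproj_self j hΨ, ip_self_eq_add i (hQ j), Complex.add_re,
      Qproj_comm i j hΨ]
    linarith [ip_self_re_nonneg (f := avg i (Qproj d N j Ψ))]
  have hd : ∀ i, b i i = a i := fun i => by
    simp only [hb, ha, ip_Qproj_self i hΨ]
  have hCS := sum_sqrt_offDiag_le hN (fun i j _ => hb0 i j) (fun i j _ => hba i j) hd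
    (Finset.sum_nonneg fun i _ => Finset.sum_nonneg fun j _ => hb0 i j)
  have hcount : ∑ i : Fin N, ∑ j : Fin N, (if i = j then 0 else a j) = ((N : ℝ) - 1) * ∑ j, a j := by
    have : ∀ i j : Fin N, (if i = j then 0 else a j) = a j - if i = j then a j else 0 := by
      intro i j; split_ifs <;> simp
    simp only [this, Finset.sum_sub_distrib, Finset.sum_ite_eq, Finset.mem_univ, if_true,
      Finset.sum_const, Finset.card_univ, Fintype.card_fin, nsmul_eq_mul]
    ring
  simp only [hv.ip_interaction_avg hΨ]
  rw [← Finset.mul_sum, hS, hn']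
  have hsum : -(v 0 * ∑ i, ∑ j, (if i = j then 0 else √(b i j)) +
      v 0 / 2 * ∑ i, ∑ j, (if i = j then 0 else a j)) ≤
      ∑ i, ∑ j, if i = j then 0 else
        (ip (Qproj d N i Ψ) fun x => (pairPot v i j x : ℂ) * avg i Ψ x).re := by
    simp only [Finset.mul_sum, ← Finset.sum_add_distrib, ← Finset.sum_neg_distrib]
    refine Finset.sum_le_sum fun i _ => Finset.sum_le_sum fun j _ => ?_
    split_ifs with h
    · simp
    · have := hv.neg_le_ip_pairPot hΨ hs hn h
      simp only [hb, ha]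
      linarith
  refine le_trans ?_ (mul_le_mul_of_nonneg_left hsum (inv_nonneg.2 hN1.le))
  rw [hcount]
  have e : ((N : ℝ) - 1)⁻¹ * -(v 0 * ∑ i, ∑ j, (if i = j then 0 else √(b i j)) +
      v 0 / 2 * (((N : ℝ) - 1) * ∑ j, a j)) =
      -(v 0 * (((N : ℝ) - 1)⁻¹ * ∑ i, ∑ j, (if i = j then 0 else √(b i j))) +
        v 0 / 2 * ∑ j, a j) := by
    field_simp
  rw [e]
  linarith [mul_le_mul_of_nonneg_left hCS hv0]

/-- A potential bounded below gives a lower bound on its quadratic form. -/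
lemma le_ip_mul_self {w : (Fin N → Fin d → ℝ) → ℝ} {K : ℝ} {f : (Fin N → Fin d → ℝ) → ℂ}
    (hw : Continuous w) (hK : ∀ x, K ≤ w x) (hf : Continuous f) :
    K * (ip f f).re ≤ (ip f fun x => (w x : ℂ) * f x).re := by
  have h : ip f (fun x => (w x : ℂ) * f x) = ((∫ x in boxN d N, w x * ‖f x‖ ^ 2 : ℝ) : ℂ) := by
    rw [ip, ← integral_complex_ofReal]
    congr 1
    ext x
    rw [mul_left_comm, ← Complex.normSq_eq_conj_mul_self, Complex.normSq_eq_norm_sq,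
      Complex.ofReal_mul]
  rw [h, Complex.ofReal_re, ip_self_re, ← integral_const_mul]
  exact integral_mono (integrable_boxN (by fun_prop)) (integrable_boxN (by fun_prop))
    fun x => mul_le_mul_of_nonneg_right (hK x) (sq_nonneg _)

/-- Lower bound on the interaction part of the second moment estimate. -/
lemma PotentialAssumptions.le_ip_excitedOp_interaction (hv : PotentialAssumptions d v vhat)
    (hN : 2 ≤ N) (hΨ : Continuous Ψ) (hs : SymmetricWF d N Ψ) (hn : (ip Ψ Ψ).re = 1) :
    ((N : ℝ) / (2 * ((N : ℝ) - 1)) * (N * vhat 0 - v 0) - v 0 / 2) * (ip (excitedOp Ψ) Ψ).re -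
      v 0 * √(ip (excitedOp Ψ) (excitedOp Ψ)).re ≤
    (ip (excitedOp Ψ) fun x => (interaction N v x : ℂ) * Ψ x).re := by
  have hQ := fun i : Fin N => continuous_Qproj i hΨ
  have hP := fun i : Fin N => continuous_avg i hΨ
  have hVr := hv.continuous_interaction (N := N)
  have hV : Continuous fun x => (interaction N v x : ℂ) := Complex.continuous_ofReal.comp hVr
  have hVm : ∀ {f : (Fin N → Fin d → ℝ) → ℂ}, Continuous f →
      Continuous fun x => (interaction N v x : ℂ) * f x := fun hf => hV.mul hf
  have h1 : (ip (excitedOp Ψ) fun x => (interaction N v x : ℂ) * Ψ x).re =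
      ∑ i, (ip (Qproj d N i Ψ) fun x => (interaction N v x : ℂ) * Qproj d N i Ψ x).re +
      ∑ i, (ip (Qproj d N i Ψ) fun x => (interaction N v x : ℂ) * avg i Ψ x).re := by
    unfold excitedOp
    rw [ip_sum_left _ (hVm hΨ) fun i _ => hQ i, Complex.re_sum, ← Finset.sum_add_distrib]
    refine Finset.sum_congr rfl fun i _ => ?_
    rw [← Complex.add_re, ← ip_add_right (hQ i) (hVm (hQ i)) (hVm (hP i))]
    congr 2
    ext x
    simp only [Qproj_eq]
    ring
  have h2 : (N : ℝ) / (2 * ((N : ℝ) - 1)) * (N * vhat 0 - v 0) * (ip (excitedOp Ψ) Ψ).re ≤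
      ∑ i, (ip (Qproj d N i Ψ) fun x => (interaction N v x : ℂ) * Qproj d N i Ψ x).re := by
    unfold excitedOp
    rw [ip_sum_left _ hΨ fun i _ => hQ i, Complex.re_sum, Finset.mul_sum]
    refine Finset.sum_le_sum fun i _ => ?_
    rw [← ip_Qproj_self i hΨ]
    exact le_ip_mul_self hVr (hv.le_interaction hN) (hQ i)
  have h3 := hv.neg_le_sum_ip_interaction_avg hN hΨ hs hn
  rw [h1]
  linarith

end Main

theorem statement6 (d : ℕ) (hd : 1 ≤ d) (v : (Fin d → ℝ) → ℝ) (vhat : (Fin d → ℤ) → ℝ)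
    (hv : PotentialAssumptions d v vhat) (N : ℕ) (hN : 2 ≤ N) (μ : ℝ) (hμ : 0 < μ)
    (Ψ : (Fin N → Fin d → ℝ) → ℂ) (hsmooth : ContDiff ℝ (⊤ : ℕ∞) Ψ)
    (hper : PeriodicWF d N Ψ) (hsym : SymmetricWF d N Ψ) (hnorm : Normalized d N Ψ)
    (hloc : Real.sqrt (∫ x in boxN d N,
        ‖HamOp d N v Ψ x - ((E0 d N v + μ / 2 : ℝ) : ℂ) * Ψ x‖ ^ 2) ≤ μ / 2) :
    (2 * π) ^ 2 * (∑ i : Fin N, ∑ j : Fin N, ∫ x in boxN d N, ∑ l : Fin d,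
        fderiv ℝ (Qproj d N i Ψ) x (dir d N j l) *
          (starRingEnd ℂ) (fderiv ℝ Ψ x (dir d N j l))).re ≤
      (v 0 + μ / 2) ^ 2 +
        (N : ℝ) / (2 * ((N : ℝ) - 1)) * (μ + 3 * v 0 + vhat 0) * (2 * μ + v 0 - vhat 0) := by
  have hf : ContDiff ℝ 2 Ψ := hsmooth.of_le (WithTop.coe_le_coe.2 le_top)
  have hΨ := hf.continuous
  have hN2 : (2 : ℝ) ≤ N := by exact_mod_cast hN
  have hN1 : (0 : ℝ) < (N : ℝ) - 1 := by linarith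
  have hn : (ip Ψ Ψ).re = 1 := by rw [ip_self_re]; exact hnorm
  have hvh0 : 0 ≤ vhat 0 := hv.nonneg 0
  have hvh : vhat 0 ≤ v 0 := hv.vhat_zero_le
  have hT := continuous_kineticOp hf
  have hA := continuous_excitedOp hΨ
  have hVr := hv.continuous_interaction (N := N)
  have hV : Continuous fun x => (interaction N v x : ℂ) * Ψ x :=
    (Complex.continuous_ofReal.comp hVr).mul hΨ
  set E : ℝ := E0 d N v + μ / 2 with hE
  have hEΨ : Continuous fun x => (E : ℂ) * Ψ x := continuous_const.mul hΨ
  have hTV : Continuous fun x => kineticOp Ψ x + (interaction N v x : ℂ) * Ψ x := hT.add hV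
  have hR : Continuous fun x => HamOp d N v Ψ x - (E : ℂ) * Ψ x := by
    simp only [hamOp_eq]
    exact hTV.sub hEΨ
  have hres : ∀ f, Continuous f → (ip f (kineticOp Ψ)).re ≤ √(ip f f).re * (μ / 2) +
      E * (ip f Ψ).re - (ip f fun x => (interaction N v x : ℂ) * Ψ x).re := by
    intro f hf
    have h1 : (ip f fun x => HamOp d N v Ψ x - (E : ℂ) * Ψ x).re = (ip f (kineticOp Ψ)).re +
        (ip f fun x => (interaction N v x : ℂ) * Ψ x).re - E * (ip f Ψ).re := by
      simp only [hamOp_eq]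
      rw [ip_sub_right hf hTV hEΨ, ip_add_right hf hT hV,
        ip_const_mul_right, Complex.sub_re, Complex.add_re, Complex.re_ofReal_mul]
    have h2 := (Complex.re_le_norm _).trans (norm_ip_le hf hR)
    rw [ip_self_re (f := fun x => HamOp d N v Ψ x - (E : ℂ) * Ψ x), h1] at h2
    linarith [mul_le_mul_of_nonneg_left hloc (Real.sqrt_nonneg (ip f f).re)]
  set θ : ℝ := (N : ℝ) / (2 * ((N : ℝ) - 1)) with hθ
  have hθ0 : 1 / 2 ≤ θ := by
    rw [hθ, div_le_div_iff₀ two_pos (by positivity)]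
    linarith
  have hθ1 : θ ≤ 1 := by
    rw [hθ, div_le_one (by positivity)]
    linarith
  have hEK : E - θ * (N * vhat 0 - v 0) ≤ μ / 2 + θ * (v 0 - vhat 0) := by
    have h1 := hv.E0_le hN
    have h2 : (N : ℝ) / 2 = θ * (N - 1) := by
      rw [hθ]
      field_simp
    have h3 : (N : ℝ) * vhat 0 / 2 = θ * (N - 1) * vhat 0 := by rw [← h2]; ring
    rw [hE]
    linarith
  set τ : ℝ := μ + θ * (v 0 - vhat 0) with hτ
  set n : ℝ := (ip (excitedOp Ψ) Ψ).re with hndef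
  set s : ℝ := √(ip (excitedOp Ψ) (excitedOp Ψ)).re with hs
  set Y : ℝ := (ip (excitedOp Ψ) (kineticOp Ψ)).re with hY
  have hnτ : (2 * π) ^ 2 * n ≤ τ := by
    refine (excited_le_kinetic hper hf).trans ((hres Ψ hΨ).trans ?_)
    have := le_ip_mul_self hVr (hv.le_interaction hN) hΨ
    rw [hn] at this ⊢
    rw [Real.sqrt_one]
    linarith
  have hs2 : (2 * π) ^ 2 * s ^ 2 ≤ Y := by
    rw [hs, Real.sq_sqrt ip_self_re_nonneg]
    exact excited_sq_le hper hf
  have hYle : Y ≤ (μ / 2 + v 0) * s + (μ + 3 * v 0 + vhat 0) / 2 * n := by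
    have hn0 : 0 ≤ n := by
      rw [hndef]
      unfold excitedOp
      rw [ip_sum_left _ hΨ fun i _ => continuous_Qproj i hΨ, Complex.re_sum]
      refine Finset.sum_nonneg fun i _ => ?_
      rw [← ip_Qproj_self i hΨ]
      exact ip_self_re_nonneg
    have h1 := hres _ hA
    have h2 := hv.le_ip_excitedOp_interaction hN hΨ hsym hn
    have h3 : E - θ * (N * vhat 0 - v 0) + v 0 / 2 ≤ (μ + 3 * v 0 + vhat 0) / 2 := by
      linarith [mul_le_mul_of_nonneg_right hθ1 (sub_nonneg.2 hvh)]
    have h4 := mul_le_mul_of_nonneg_right h3 hn0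
    linarith
  rw [sum_integral_fderiv_Qproj hper hf]
  have hX : (2 * π) ^ 2 * Y ≤ (v 0 + μ / 2) ^ 2 + (μ + 3 * v 0 + vhat 0) * τ := by
    have h1 := mul_le_mul_of_nonneg_left hYle (sq_nonneg (2 * π))
    have h2 := mul_le_mul_of_nonneg_left hs2 (sq_nonneg (2 * π))
    have h3 := mul_le_mul_of_nonneg_left hnτ (show 0 ≤ (μ + 3 * v 0 + vhat 0) / 2 by linarith)
    nlinarith [sq_nonneg (v 0 + μ / 2 - (2 * π) ^ 2 * s)]
  have hτle : τ ≤ θ * (2 * μ + v 0 - vhat 0) := by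
    rw [hτ]
    linarith [mul_le_mul_of_nonneg_right hθ0 hμ.le]
  have h := mul_le_mul_of_nonneg_left hτle (show 0 ≤ μ + 3 * v 0 + vhat 0 by linarith)
  linarith
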